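/- Let α₂ be the unique real root in the interval (2,3) of the polynomial q⁴ − 8q³ + 22q² − 28q + 17 (α₂ ≈ 2.225). Then every bridgeless near-cubic finite multigraph G satisfies F(G,q) ≠ 0 for all real q with 2 < q ≤ α₂. -/

import Mathlib

/-- A finite multigraph on vertex type `V` with edge type `E`: each edge `e` has two
(possibly equal) endpoints `fst e` and `snd e`. -/
structure Multigraph (V E : Type) where
  fst : E → V
  snd : E → V

namespace Multigraph

variable {V E : Type}

/-- `a` and `b` are joined by some edge belonging to the edge set `F`. -/
def edgeRelOn (G : Multigraph V E) (F : Set E) (a b : V) : Prop :=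
  ∃ e ∈ F, (G.fst e = a ∧ G.snd e = b) ∨ (G.fst e = b ∧ G.snd e = a)

/-- Reachability in the spanning subgraph `(V, F)`. -/
def Reach (G : Multigraph V E) (F : Set E) : V → V → Prop :=
  Relation.EqvGen (G.edgeRelOn F)

/-- The setoid on `V` whose classes are the connected components of the
spanning subgraph `(V, F)`. -/
def reachSetoid (G : Multigraph V E) (F : Set E) : Setoid V :=
  Relation.EqvGen.setoid (G.edgeRelOn F)

/-- The number of connected components of the spanning subgraph `(V, F)`. -/
noncomputable def ncomp (G : Multigraph V E) (F : Set E) : ℕ :=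
  Nat.card (Quotient (G.reachSetoid F))

/-- The number of connected components of `G`. -/
noncomputable def numComponents (G : Multigraph V E) : ℕ :=
  G.ncomp Set.univ

/-- `G` is connected. -/
def Connected (G : Multigraph V E) : Prop :=
  G.numComponents = 1

/-- An edge is a bridge if deleting it increases the number of connected components. -/
def IsBridge (G : Multigraph V E) (e : E) : Prop :=
  G.numComponents < G.ncomp {e' | e' ≠ e}

/-- `G` has no bridge. -/
def Bridgeless (G : Multigraph V E) : Prop :=
  ∀ e, ¬ G.IsBridge e

/-- `G` has no loops. -/
def Loopless (G : Multigraph V E) : Prop :=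
  ∀ e, G.fst e ≠ G.snd e

/-- Deleting a set `S` of vertices (and all edges meeting `S`). -/
def deleteVerts (G : Multigraph V E) (S : Set V) :
    Multigraph {v // v ∉ S} {e // G.fst e ∉ S ∧ G.snd e ∉ S} where
  fst := fun e => ⟨G.fst e.1, e.2.1⟩
  snd := fun e => ⟨G.snd e.1, e.2.2⟩

/-- A cut-vertex: a vertex whose deletion increases the number of components. -/
def IsCutVertex (G : Multigraph V E) (x : V) : Prop :=
  G.numComponents < (G.deleteVerts {x}).numComponents

/-- A graph is non-separable if it has at most one vertex and at most one edge, or it is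
connected, loopless and has no cut-vertex. -/
def NonSeparable (G : Multigraph V E) : Prop :=
  (Nat.card V ≤ 1 ∧ Nat.card E ≤ 1) ∨
    (G.Connected ∧ G.Loopless ∧ ∀ x, ¬ G.IsCutVertex x)

/-- The degree of a vertex, counted with edge multiplicity; a loop contributes `2`. -/
noncomputable def degree (G : Multigraph V E) (v : V) : ℕ :=
  Nat.card {e | G.fst e = v} + Nat.card {e | G.snd e = v}

/-- The flow polynomial `F(G,q) = ∑_{E'⊆E} (−1)^{|E|−|E'|} q^{|E'|+c(E')−|V|}`,
where `c(E')` is the number of connected components of the spanning subgraph `(V,E')`. -/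
noncomputable def flowPoly (G : Multigraph V E) [Finite V] [Finite E] : Polynomial ℝ :=
  letI : Fintype E := Fintype.ofFinite E
  ∑ E' : Finset E, (-1 : Polynomial ℝ) ^ (Nat.card E - E'.card) *
    Polynomial.X ^ (E'.card + G.ncomp ↑E' - Nat.card V)

/-- A subgraph of a multigraph: a set of vertices and a set of edges with both
endpoints among those vertices. -/
structure Subgraph (G : Multigraph V E) where
  verts : Set V
  edges : Set E
  fst_mem : ∀ ⦃e⦄, e ∈ edges → G.fst e ∈ verts
  snd_mem : ∀ ⦃e⦄, e ∈ edges → G.snd e ∈ verts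

/-- A subgraph, viewed as a multigraph in its own right. -/
def Subgraph.toMultigraph {G : Multigraph V E} (H : G.Subgraph) :
    Multigraph H.verts H.edges where
  fst := fun e => ⟨G.fst e.1, H.fst_mem e.2⟩
  snd := fun e => ⟨G.snd e.1, H.snd_mem e.2⟩

/-- `H` is a connected component of `G`: its vertex set is the set of vertices reachable
from some vertex, and its edges are all the edges of `G` joining its vertices. -/
def IsComponent {G : Multigraph V E} (H : G.Subgraph) : Prop :=
  (∃ v ∈ H.verts, ∀ u, u ∈ H.verts ↔ G.Reach Set.univ v u) ∧
    ∀ e, e ∈ H.edges ↔ (G.fst e ∈ H.verts ∧ G.snd e ∈ H.verts)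

/-- `H` is a block of `G`: a maximal non-separable subgraph. -/
def IsBlock {G : Multigraph V E} (H : G.Subgraph) : Prop :=
  H.toMultigraph.NonSeparable ∧
    ∀ H' : G.Subgraph, H'.toMultigraph.NonSeparable →
      H.verts ⊆ H'.verts → H.edges ⊆ H'.edges → H' = H

/-- A trivial block: a single vertex and no edges. -/
def Subgraph.IsTrivial {G : Multigraph V E} (H : G.Subgraph) : Prop :=
  (∃ v, H.verts = {v}) ∧ H.edges = ∅

/-- An orientation of a multigraph: each edge is given a tail and a head,
consistent with its two endpoints. -/
structure Orientation (G : Multigraph V E) where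
  tail : E → V
  head : E → V
  consistent : ∀ e, (tail e = G.fst e ∧ head e = G.snd e) ∨
    (tail e = G.snd e ∧ head e = G.fst e)

open Classical in
/-- A `Γ`-flow on an orientation `D`: at every vertex, the sum of the values on
the arcs with that tail equals the sum of the values on the arcs with that head. -/
noncomputable def Orientation.IsFlow {G : Multigraph V E} [Fintype E]
    (D : G.Orientation) {Γ : Type} [AddCommGroup Γ] (φ : E → Γ) : Prop :=
  ∀ v : V, ∑ e ∈ Finset.univ.filter (fun e => D.tail e = v), φ e =
    ∑ e ∈ Finset.univ.filter (fun e => D.head e = v), φ e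

/-- Deleting an edge. -/
def deleteEdge (G : Multigraph V E) (e₀ : E) : Multigraph V {e // e ≠ e₀} where
  fst := fun e => G.fst e.1
  snd := fun e => G.snd e.1

/-- Adding a new edge joining `x` and `y`. -/
def addEdge (G : Multigraph V E) (x y : V) : Multigraph V (E ⊕ Unit) where
  fst := Sum.elim G.fst fun _ => x
  snd := Sum.elim G.snd fun _ => y

/-- Contracting a set `F` of edges: vertices joined through `F` are identified,
and the edges of `F` are removed. -/
def contract (G : Multigraph V E) (F : Set E) :
    Multigraph (Quotient (G.reachSetoid F)) {e // e ∉ F} where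
  fst := fun e => Quotient.mk _ (G.fst e.1)
  snd := fun e => Quotient.mk _ (G.snd e.1)

/-- The number of proper colourings of the vertices of `G` with `n` colours. -/
noncomputable def properColorings (G : Multigraph V E) (n : ℕ) : ℕ :=
  Nat.card {f : V → Fin n // ∀ e, f (G.fst e) ≠ f (G.snd e)}

/-- An isomorphism of multigraphs. -/
structure Iso {V' E' : Type} (G : Multigraph V E) (G' : Multigraph V' E') where
  vmap : V ≃ V'
  emap : E ≃ E'
  ends : ∀ e, (G'.fst (emap e) = vmap (G.fst e) ∧ G'.snd (emap e) = vmap (G.snd e)) ∨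
    (G'.fst (emap e) = vmap (G.snd e) ∧ G'.snd (emap e) = vmap (G.fst e))

open Classical in
/-- Subdividing the edge `e₀`: it is replaced by a path of length two through a new vertex. -/
noncomputable def subdivide (G : Multigraph V E) (e₀ : E) :
    Multigraph (V ⊕ Unit) (E ⊕ Unit) where
  fst := Sum.elim (fun e => Sum.inl (G.fst e)) fun _ => Sum.inr ()
  snd := Sum.elim (fun e => if e = e₀ then Sum.inr () else Sum.inl (G.snd e))
    fun _ => Sum.inl (G.snd e₀)

/-- `G` is a subdivision of `H`. -/
inductive IsSubdivisionOf :
    {V E V' E' : Type} → Multigraph V E → Multigraph V' E' → Prop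
  | of_iso {V E V' E'} {G : Multigraph V E} {H : Multigraph V' E'} :
      Iso G H → IsSubdivisionOf G H
  | step {V E V' E'} {G : Multigraph V E} {H : Multigraph V' E'} (e : E) :
      IsSubdivisionOf G H → IsSubdivisionOf (G.subdivide e) H
  | iso_left {V₁ E₁ V₂ E₂ V' E'} {G₁ : Multigraph V₁ E₁} {G₂ : Multigraph V₂ E₂}
      {H : Multigraph V' E'} :
      Iso G₁ G₂ → IsSubdivisionOf G₂ H → IsSubdivisionOf G₁ H

/-- A multigraph is 3-connected if it has at least 4 vertices and remains connected
after deleting any set of fewer than 3 vertices. -/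
def ThreeConnected (G : Multigraph V E) : Prop :=
  4 ≤ Nat.card V ∧ ∀ S : Set V, S.ncard < 3 → (G.deleteVerts S).Connected

/-- `G` is (isomorphic to) the multigraph `Z_k` with two vertices joined by `k`
parallel edges. -/
def IsZk (G : Multigraph V E) (k : ℕ) : Prop :=
  Nat.card V = 2 ∧ Nat.card E = k ∧ G.Loopless

/-- `G` is essentially 3-connected: a subdivision of a 3-connected graph,
or `Z_k` for some `k ≥ 3`. -/
def EssentiallyThreeConnected (G : Multigraph V E) : Prop :=
  (∃ (V' E' : Type) (H : Multigraph V' E'), H.ThreeConnected ∧ G.IsSubdivisionOf H) ∨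
    ∃ k, 3 ≤ k ∧ G.IsZk k

end Multigraph

set_option linter.unusedSectionVars false
set_option linter.unusedSimpArgs false
set_option linter.unusedVariables false

namespace NC
variable {V : Type} [DecidableEq V]

/-- substitution `b ↦ a` -/
def sbt (b a : V) : V → V := fun v => if v = b then a else v

lemma sbt_self (b a : V) : sbt b a b = a := by simp [sbt]
lemma sbt_ne {b a v : V} (h : v ≠ b) : sbt b a v = v := by simp [sbt, h]

/-- identification of `b` with `a` in an edge multiset -/
def ctr (b a : V) (M : Multiset (Sym2 V)) : Multiset (Sym2 V) := M.map (Sym2.map (sbt b a))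

@[simp] lemma ctr_zero (b a : V) : ctr b a 0 = 0 := rfl
@[simp] lemma ctr_cons (b a x y : V) (M : Multiset (Sym2 V)) :
    ctr b a (s(x, y) ::ₘ M) = s(sbt b a x, sbt b a y) ::ₘ ctr b a M := by simp [ctr]
@[simp] lemma ctr_add (b a : V) (M N : Multiset (Sym2 V)) :
    ctr b a (M + N) = ctr b a M + ctr b a N := by simp [ctr]
@[simp] lemma card_ctr (b a : V) (M : Multiset (Sym2 V)) :
    (ctr b a M).card = M.card := by simp [ctr]

/-- all edges have their ends in `X` -/
def In (X : Finset V) (M : Multiset (Sym2 V)) : Prop := ∀ e ∈ M, ∀ v ∈ e, v ∈ X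

lemma In_zero (X : Finset V) : In X (0 : Multiset (Sym2 V)) := by intro e he; simp at he
lemma In_cons {X : Finset V} {a b : V} {M : Multiset (Sym2 V)} :
    In X (s(a, b) ::ₘ M) ↔ a ∈ X ∧ b ∈ X ∧ In X M := by
  simp only [In, Multiset.mem_cons]
  constructor
  · intro h
    exact ⟨h _ (Or.inl rfl) a (by simp), h _ (Or.inl rfl) b (by simp), fun e he => h e (Or.inr he)⟩
  · rintro ⟨h1, h2, h3⟩ e (rfl | he) v hv
    · rcases Sym2.mem_iff.1 hv with rfl | rfl <;> assumption
    · exact h3 e he v hv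
lemma In_add {X : Finset V} {M N : Multiset (Sym2 V)} :
    In X (M + N) ↔ In X M ∧ In X N := by
  simp only [In, Multiset.mem_add]
  constructor
  · intro h; exact ⟨fun e he => h e (Or.inl he), fun e he => h e (Or.inr he)⟩
  · rintro ⟨h1, h2⟩ e (he | he); exacts [h1 e he, h2 e he]
lemma In.mono {X Y : Finset V} {M : Multiset (Sym2 V)} (h : In X M) (hXY : X ⊆ Y) : In Y M :=
  fun e he v hv => hXY (h e he v hv)
lemma In.ctr {X : Finset V} {M : Multiset (Sym2 V)} {a b : V} (h : In X M) (ha : a ∈ X) :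
    In X (ctr b a M) := by
  intro e he v hv
  simp only [NC.ctr, Multiset.mem_map] at he
  obtain ⟨e', he', rfl⟩ := he
  rw [Sym2.mem_map] at hv
  obtain ⟨w, hw, rfl⟩ := hv
  by_cases hwb : w = b
  · subst hwb; rw [sbt_self]; exact ha
  · rw [sbt_ne hwb]; exact h e' he' w hw
lemma ctr_fresh {X : Finset V} {M : Multiset (Sym2 V)} {a b : V} (h : In X M) (hb : b ∉ X) :
    ctr b a M = M := by
  conv_rhs => rw [← Multiset.map_id M]
  apply Multiset.map_congr rfl
  intro e he
  induction e with | _ x y =>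
  have hx : x ≠ b := fun hh => hb (hh ▸ h _ he x (by simp))
  have hy : y ≠ b := fun hh => hb (hh ▸ h _ he y (by simp))
  simp [sbt_ne hx, sbt_ne hy]

/-- The rules satisfied by the flow polynomial at `q = s + 2`. -/
structure Rules (s : ℝ) (F : Multiset (Sym2 V) → ℝ) : Prop where
  zero : F 0 = 1
  loop : ∀ a M, F (s(a, a) ::ₘ M) = (1 + s) * F M
  dc : ∀ a b M, a ≠ b → F (s(a, b) ::ₘ M) = F (ctr b a M) - F M

variable {s : ℝ} {F : Multiset (Sym2 V) → ℝ}

lemma pend (hF : Rules s F) {X : Finset V} {M : Multiset (Sym2 V)} {a b : V} (hab : b ≠ a) (h : In X M)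
    (hb : b ∉ X) : F (s(a, b) ::ₘ M) = 0 := by
  rw [hF.dc a b M hab.symm, ctr_fresh h hb, sub_self]

/-- same as `pend` with an equation for the multiset -/
lemma pend' (hF : Rules s F) {X : Finset V} {N M : Multiset (Sym2 V)} {a b : V} (hab : b ≠ a)
    (h : In X M) (hb : b ∉ X) (hN : N = s(a, b) ::ₘ M) : F N = 0 := by
  rw [hN]; exact pend hF hab h hb

lemma loop' (hF : Rules s F) {N M : Multiset (Sym2 V)} {a : V} (hN : N = s(a, a) ::ₘ M) :
    F N = (1 + s) * F M := by rw [hN, hF.loop]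

lemma dc' (hF : Rules s F) {N M : Multiset (Sym2 V)} {a b : V} (hab : a ≠ b)
    (hN : N = s(a, b) ::ₘ M) : F N = F (ctr b a M) - F M := by rw [hN, hF.dc _ _ _ hab]

lemma supp (hF : Rules s F) {X : Finset V} {M : Multiset (Sym2 V)} {x a b : V} (h : In X M)
    (hx : x ∉ X) (ha : x ≠ a) (hb : x ≠ b) :
    F (s(a, x) ::ₘ s(b, x) ::ₘ M) = F (s(a, b) ::ₘ M) := by
  rw [hF.dc a x _ ha.symm, pend hF hb h hx, ctr_cons, sbt_self, sbt_ne hb.symm, ctr_fresh h hx,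
    sub_zero, Sym2.eq_swap]

/-- Induction principle for identities that are linear in the part `M` of the edges inside
`insert h X`. -/
lemma net_induct {h : V} {X : Finset V} (hh : h ∉ X)
    (P : Multiset (Sym2 V) → V → V → Prop)
    (base : ∀ p ∈ insert h X, ∀ r ∈ insert h X, P 0 p r)
    (loop : ∀ M a, In (insert h X) M → a ∈ insert h X → ∀ p ∈ insert h X, ∀ r ∈ insert h X,
      P M p r → P (s(a, a) ::ₘ M) p r)
    (step : ∀ M a b, In (insert h X) M → a ∈ insert h X → b ∈ X → b ≠ h → a ≠ b →
      ∀ p ∈ insert h X, ∀ r ∈ insert h X,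
      P M p r → P (ctr b a M) (sbt b a p) (sbt b a r) → P (s(a, b) ::ₘ M) p r) :
    ∀ M, In (insert h X) M → ∀ p ∈ insert h X, ∀ r ∈ insert h X, P M p r := by
  have key : ∀ n, ∀ M : Multiset (Sym2 V), M.card = n → In (insert h X) M →
      ∀ p ∈ insert h X, ∀ r ∈ insert h X, P M p r := by
    intro n
    induction n with
    | zero =>
      intro M hM _ p hp r hr
      rw [Multiset.card_eq_zero] at hM
      subst hM; exact base p hp r hr
    | succ n ih =>
      intro M hM hin p hp r hr
      obtain ⟨e, he⟩ := Multiset.card_pos_iff_exists_mem.1 (by omega : 0 < M.card)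
      obtain ⟨M', rfl⟩ := Multiset.exists_cons_of_mem he
      clear he
      have hc : M'.card = n := by simpa using hM
      have gen : ∀ a b, b ∈ X → a ≠ b → In (insert h X) (s(a, b) ::ₘ M') →
          P (s(a, b) ::ₘ M') p r := by
        intro a b hb hab hin
        obtain ⟨h1, h2, h3⟩ := In_cons.1 hin
        have hsub : ∀ v ∈ insert h X, sbt b a v ∈ insert h X := by
          intro v hv
          by_cases hvb : v = b
          · rw [hvb, sbt_self]; exact h1
          · rw [sbt_ne hvb]; exact hv
        exact step M' a b h3 h1 hb (fun hbh => hh (hbh ▸ hb)) hab p hp r hr (ih M' hc h3 p hp r hr)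
          (ih _ (by simpa using hc) (h3.ctr h1) _ (hsub p hp) _ (hsub r hr))
      induction e with | _ a b =>
      obtain ⟨h1, h2, h3⟩ := In_cons.1 hin
      by_cases hab : a = b
      · subst hab
        exact loop M' a h3 h1 p hp r hr (ih M' hc h3 p hp r hr)
      · by_cases hb : b = h
        · have ha : a ∈ X := by
            rcases Finset.mem_insert.1 h1 with h1 | h1
            · exact absurd (h1.trans hb.symm) hab
            · exact h1
          rw [Sym2.eq_swap]
          rw [Sym2.eq_swap] at hin
          exact gen b a ha (Ne.symm hab) hin
        · exact gen a b (by simpa [hb] using h2) hab hin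
  exact fun M => key _ M rfl

/-- product formula at a cut vertex -/
lemma D0 (hF : Rules s F) {h : V} {X Y : Finset V} (hX : h ∉ X) (hXY : Disjoint X Y)
    {M₂ : Multiset (Sym2 V)} (h2 : In (insert h Y) M₂) :
    ∀ M₁, In (insert h X) M₁ → F (M₁ + M₂) = F M₁ * F M₂ := by
  have := net_induct hX (fun M _ _ => F (M + M₂) = F M * F M₂)
    (by intro p _ r _; simp [hF.zero])
    (by
      intro M a _ _ p _ r _ ih
      simp only [Multiset.cons_add, hF.loop, ih]; ring)
    (by
      intro M a b _ _ hb hbh hab p _ r _ ih1 ih2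
      have hbY : b ∉ insert h Y := by
        simp only [Finset.mem_insert, not_or]
        exact ⟨hbh, Finset.disjoint_left.1 hXY hb⟩
      simp only [Multiset.cons_add, hF.dc a b _ hab, ctr_add, ctr_fresh h2 hbY, ih1, ih2]; ring)
  exact fun M hM => this M hM h (by simp) h (by simp)

/-- one edge between the two sides of a cut vertex -/
lemma D1 (hF : Rules s F) {h : V} {X Y : Finset V} (hX : h ∉ X) (hXY : Disjoint X Y)
    {M₂ : Multiset (Sym2 V)} (h2 : In (insert h Y) M₂) {p₂ : V} (hp2 : p₂ ∈ insert h Y) :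
    ∀ M₁, In (insert h X) M₁ → ∀ p₁ ∈ insert h X,
    (1 + s) * F (s(p₁, p₂) ::ₘ (M₁ + M₂)) = F (s(h, p₁) ::ₘ M₁) * F (s(h, p₂) ::ₘ M₂) := by
  have hY : ∀ b ∈ X, b ≠ h → b ∉ insert h Y := by
    intro b hb hbh
    simp only [Finset.mem_insert, not_or]
    exact ⟨hbh, Finset.disjoint_left.1 hXY hb⟩
  have := net_induct hX (fun M p _ =>
    (1 + s) * F (s(p, p₂) ::ₘ (M + M₂)) = F (s(h, p) ::ₘ M) * F (s(h, p₂) ::ₘ M₂))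
    (by
      intro p hp r _
      by_cases hph : p = h
      · subst hph; simp only [hF.loop, hF.zero, zero_add]; ring
      · have hpX : p ∈ X := by simpa [hph] using hp
        have h3 := hY p hpX hph
        rw [zero_add, Sym2.eq_swap, pend hF (show p ≠ p₂ by rintro rfl; exact h3 hp2) h2 h3,
          pend hF hph (In_zero ∅) (by simp)]; ring)
    (by
      intro M a _ _ p _ r _ ih
      have e0 : F (s(p, p₂) ::ₘ (s(a, a) ::ₘ M + M₂)) = (1 + s) * F (s(p, p₂) ::ₘ (M + M₂)) :=
        loop' hF (a := a) (by simp only [← Multiset.singleton_add]; abel)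
      have e1 : F (s(h, p) ::ₘ s(a, a) ::ₘ M) = (1 + s) * F (s(h, p) ::ₘ M) :=
        loop' hF (a := a) (by simp only [← Multiset.singleton_add]; abel)
      rw [e0, e1]
      linear_combination (1 + s) * ih)
    (by
      intro M a b _ _ hb hbh hab p _ r _ ih1 ih2
      have h3 := hY b hb hbh
      have e0 : F (s(p, p₂) ::ₘ (s(a, b) ::ₘ M + M₂)) = F (ctr b a (s(p, p₂) ::ₘ (M + M₂))) - F (s(p, p₂) ::ₘ (M + M₂)) :=
        dc' hF hab (by simp only [← Multiset.singleton_add]; abel)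
      have e1 : F (s(h, p) ::ₘ s(a, b) ::ₘ M) = F (ctr b a (s(h, p) ::ₘ M)) - F (s(h, p) ::ₘ M) :=
        dc' hF hab (by simp only [← Multiset.singleton_add]; abel)
      rw [e0, e1]
      simp only [ctr_cons, ctr_add, ctr_fresh h2 h3, sbt_ne hbh.symm,
        sbt_ne (show p₂ ≠ b from fun hh => h3 (hh ▸ hp2))]
      linear_combination ih2 - ih1)
  exact fun M hM p hp => this M hM p hp h (by simp)

/-- two edges between the two sides of a cut vertex -/
lemma D4 (hF : Rules s F) {h : V} {X Y : Finset V} (hX : h ∉ X) (hXY : Disjoint X Y)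
    {M₂ : Multiset (Sym2 V)} (h2 : In (insert h Y) M₂) {p₂ r₂ : V} (hp2 : p₂ ∈ insert h Y)
    (hr2 : r₂ ∈ insert h Y) :
    ∀ M₁, In (insert h X) M₁ → ∀ p₁ ∈ insert h X, ∀ r₁ ∈ insert h X,
    (1 + s) * s * F (s(p₁, p₂) ::ₘ s(r₁, r₂) ::ₘ (M₁ + M₂)) =
      F (s(h, p₁) ::ₘ s(h, r₁) ::ₘ M₁) * F (s(h, p₂) ::ₘ s(h, r₂) ::ₘ M₂)
      + (1 + s) * (F (s(p₁, r₁) ::ₘ M₁) * F (s(p₂, r₂) ::ₘ M₂))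
      - F (s(p₁, r₁) ::ₘ M₁) * F (s(h, p₂) ::ₘ s(h, r₂) ::ₘ M₂)
      - F (s(h, p₁) ::ₘ s(h, r₁) ::ₘ M₁) * F (s(p₂, r₂) ::ₘ M₂) := by
  have hY : ∀ b ∈ X, b ≠ h → b ∉ insert h Y := by
    intro b hb hbh
    simp only [Finset.mem_insert, not_or]
    exact ⟨hbh, Finset.disjoint_left.1 hXY hb⟩
  have := net_induct hX (fun M p r =>
    (1 + s) * s * F (s(p, p₂) ::ₘ s(r, r₂) ::ₘ (M + M₂)) =
      F (s(h, p) ::ₘ s(h, r) ::ₘ M) * F (s(h, p₂) ::ₘ s(h, r₂) ::ₘ M₂)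
      + (1 + s) * (F (s(p, r) ::ₘ M) * F (s(p₂, r₂) ::ₘ M₂))
      - F (s(p, r) ::ₘ M) * F (s(h, p₂) ::ₘ s(h, r₂) ::ₘ M₂)
      - F (s(h, p) ::ₘ s(h, r) ::ₘ M) * F (s(p₂, r₂) ::ₘ M₂))
    (by
      intro p hp r hr
      have hsw : ∀ x, x ∈ insert h X → x ≠ h → x ∉ insert h Y := fun x hx hxh =>
        hY x (by simpa [hxh] using hx) hxh
      rw [zero_add]
      by_cases hpr : p = r
      · subst hpr
        by_cases hph : p = h
        · subst hph; simp only [hF.loop, hF.zero]; ring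
        · have h3 := hsw p hp hph
          rw [Sym2.eq_swap (a := p) (b := p₂), Sym2.eq_swap (a := p) (b := r₂),
            supp hF h2 h3 (fun hh => h3 (hh ▸ hp2)) (fun hh => h3 (hh ▸ hr2)),
            supp hF (In_zero ∅) (by simp) hph hph]
          simp only [hF.loop, hF.zero]; ring
      · by_cases hph : p = h
        · have hrh : r ≠ h := fun hh => hpr (hph.trans hh.symm)
          have h3 := hsw r hr hrh
          have e1 : F (s(p, p₂) ::ₘ s(r, r₂) ::ₘ M₂) = 0 :=
            pend' hF (X := insert h Y) (a := r₂) (b := r) (M := s(p, p₂) ::ₘ M₂)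
              (fun hh => h3 (hh ▸ hr2))
              (In_cons.2 ⟨by simp [hph], hp2, h2⟩) h3
              (by rw [Multiset.cons_swap, Sym2.eq_swap (a := r)])
          have e2 : F (s(h, p) ::ₘ s(h, r) ::ₘ 0) = 0 :=
            pend' hF (X := {h}) (a := h) (b := r) (M := s(h, p) ::ₘ 0) hrh
              (In_cons.2 ⟨by simp, by simp [hph], In_zero _⟩) (by simpa using hrh)
              (by rw [Multiset.cons_swap])
          have e3 : F (s(p, r) ::ₘ 0) = 0 := pend hF (Ne.symm hpr) (In_zero ∅) (by simp)
          rw [e1, e2, e3]; ring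
        · have h3 := hsw p hp hph
          have e1 : F (s(p, p₂) ::ₘ s(r, r₂) ::ₘ M₂) = 0 :=
            pend' hF (X := insert r (insert h Y)) (a := p₂) (b := p) (M := s(r, r₂) ::ₘ M₂)
              (fun hh => h3 (hh ▸ hp2))
              (In_cons.2 ⟨by simp, Finset.mem_insert_of_mem hr2,
                h2.mono (Finset.subset_insert _ _)⟩)
              (by rw [Finset.mem_insert, not_or]; exact ⟨hpr, h3⟩)
              (by rw [Sym2.eq_swap (a := p)])
          have e2 : F (s(h, p) ::ₘ s(h, r) ::ₘ 0) = 0 :=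
            pend' hF (X := {h, r}) (a := h) (b := p) (M := s(h, r) ::ₘ 0) hph
              (In_cons.2 ⟨by simp, by simp, In_zero _⟩) (by simp [hph, hpr]) rfl
          have e3 : F (s(p, r) ::ₘ 0) = 0 := pend hF (Ne.symm hpr) (In_zero ∅) (by simp)
          rw [e1, e2, e3]; ring)
    (by
      intro M a _ _ p _ r _ ih
      have e0 : F (s(p, p₂) ::ₘ s(r, r₂) ::ₘ (s(a, a) ::ₘ M + M₂)) = (1 + s) * F (s(p, p₂) ::ₘ s(r, r₂) ::ₘ (M + M₂)) :=
        loop' hF (a := a) (by simp only [← Multiset.singleton_add]; abel)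
      have e1 : F (s(h, p) ::ₘ s(h, r) ::ₘ s(a, a) ::ₘ M) = (1 + s) * F (s(h, p) ::ₘ s(h, r) ::ₘ M) :=
        loop' hF (a := a) (by simp only [← Multiset.singleton_add]; abel)
      have e2 : F (s(p, r) ::ₘ s(a, a) ::ₘ M) = (1 + s) * F (s(p, r) ::ₘ M) :=
        loop' hF (a := a) (by simp only [← Multiset.singleton_add]; abel)
      rw [e0, e1, e2]
      linear_combination (1 + s) * ih)
    (by
      intro M a b _ _ hb hbh hab p _ r _ ih1 ih2
      have h3 := hY b hb hbh
      have e0 : F (s(p, p₂) ::ₘ s(r, r₂) ::ₘ (s(a, b) ::ₘ M + M₂)) = F (ctr b a (s(p, p₂) ::ₘ s(r, r₂) ::ₘ (M + M₂))) - F (s(p, p₂) ::ₘ s(r, r₂) ::ₘ (M + M₂)) :=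
        dc' hF hab (by simp only [← Multiset.singleton_add]; abel)
      have e1 : F (s(h, p) ::ₘ s(h, r) ::ₘ s(a, b) ::ₘ M) = F (ctr b a (s(h, p) ::ₘ s(h, r) ::ₘ M)) - F (s(h, p) ::ₘ s(h, r) ::ₘ M) :=
        dc' hF hab (by simp only [← Multiset.singleton_add]; abel)
      have e2 : F (s(p, r) ::ₘ s(a, b) ::ₘ M) = F (ctr b a (s(p, r) ::ₘ M)) - F (s(p, r) ::ₘ M) :=
        dc' hF hab (by simp only [← Multiset.singleton_add]; abel)
      rw [e0, e1, e2]
      simp only [ctr_cons, ctr_add, ctr_fresh h2 h3, sbt_ne hbh.symm,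
        sbt_ne (show p₂ ≠ b from fun hh => h3 (hh ▸ hp2)),
        sbt_ne (show r₂ ≠ b from fun hh => h3 (hh ▸ hr2))]
      linear_combination ih2 - ih1)
  exact fun M hM p hp r hr => this M hM p hp r hr

/-- two-edge cut -/
lemma D2 (hF : Rules s F) {X Y : Finset V} (hXY : Disjoint X Y)
    {M₁ M₂ : Multiset (Sym2 V)} (h1 : In X M₁) (h2 : In Y M₂) {p₁ p₂ r₁ r₂ : V} (hp1 : p₁ ∈ X)
    (hr1 : r₁ ∈ X) (hp2 : p₂ ∈ Y) (hr2 : r₂ ∈ Y) :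
    (1 + s) * F (s(p₁, p₂) ::ₘ s(r₁, r₂) ::ₘ (M₁ + M₂)) =
      F (s(p₁, r₁) ::ₘ M₁) * F (s(p₂, r₂) ::ₘ M₂) := by
  have hY : ∀ b ∈ X, b ∉ Y := fun b hb => Finset.disjoint_left.1 hXY hb
  have hne : ∀ b ∈ X, ∀ c ∈ Y, b ≠ c := by
    rintro b hb c hc rfl; exact hY b hb hc
  have hins : insert p₁ (X.erase p₁) = X := Finset.insert_erase hp1
  have := net_induct (h := p₁) (X := X.erase p₁) (by simp) (fun M _ r =>
    (1 + s) * F (s(p₁, p₂) ::ₘ s(r, r₂) ::ₘ (M + M₂)) =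
      F (s(p₁, r) ::ₘ M) * F (s(p₂, r₂) ::ₘ M₂))
    (by
      rw [hins]
      intro _ _ r hr
      by_cases hpr : r = p₁
      · subst hpr
        rw [zero_add, Sym2.eq_swap (a := r) (b := p₂), Sym2.eq_swap (a := r) (b := r₂),
          supp hF h2 (hY r hr) (hne _ hr _ hp2) (hne _ hr _ hr2), hF.loop, hF.zero, mul_one]
      · have e1 : F (s(p₁, p₂) ::ₘ s(r, r₂) ::ₘ M₂) = 0 :=
          pend' hF (X := insert p₁ Y) (a := r₂) (b := r) (M := s(p₁, p₂) ::ₘ M₂)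
            (hne _ hr _ hr2)
            (In_cons.2 ⟨by simp, by simp [hp2], h2.mono (Finset.subset_insert _ _)⟩)
            (by simp [hpr, hY r hr])
            (by rw [Multiset.cons_swap, Sym2.eq_swap (a := r)])
        have e2 : F (s(p₁, r) ::ₘ 0) = 0 := pend hF hpr (In_zero ∅) (by simp)
        rw [zero_add, e1, e2]; ring)
    (by
      intro M a _ _ p _ r _ ih
      have e0 : F (s(p₁, p₂) ::ₘ s(r, r₂) ::ₘ (s(a, a) ::ₘ M + M₂)) =
          (1 + s) * F (s(p₁, p₂) ::ₘ s(r, r₂) ::ₘ (M + M₂)) :=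
        loop' hF (a := a) (by simp only [← Multiset.singleton_add]; abel)
      have e1 : F (s(p₁, r) ::ₘ s(a, a) ::ₘ M) = (1 + s) * F (s(p₁, r) ::ₘ M) :=
        loop' hF (a := a) (by simp only [← Multiset.singleton_add]; abel)
      rw [e0, e1]
      linear_combination (1 + s) * ih)
    (by
      intro M a b _ _ hb hbh hab p _ r _ ih1 ih2
      have hbX : b ∈ X := Finset.mem_of_mem_erase hb
      have e0 : F (s(p₁, p₂) ::ₘ s(r, r₂) ::ₘ (s(a, b) ::ₘ M + M₂)) =
          F (ctr b a (s(p₁, p₂) ::ₘ s(r, r₂) ::ₘ (M + M₂)))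
          - F (s(p₁, p₂) ::ₘ s(r, r₂) ::ₘ (M + M₂)) :=
        dc' hF hab (by simp only [← Multiset.singleton_add]; abel)
      have e1 : F (s(p₁, r) ::ₘ s(a, b) ::ₘ M) =
          F (ctr b a (s(p₁, r) ::ₘ M)) - F (s(p₁, r) ::ₘ M) :=
        dc' hF hab (by simp only [← Multiset.singleton_add]; abel)
      rw [e0, e1]
      simp only [ctr_cons, ctr_add, ctr_fresh h2 (hY b hbX), sbt_ne hbh.symm,
        sbt_ne (hne b hbX p₂ hp2).symm, sbt_ne (hne b hbX r₂ hr2).symm]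
      linear_combination ih2 - ih1)
  rw [hins] at this
  exact this M₁ h1 p₁ hp1 r₁ hr1

/-- the identity at a cubic neighbour `x` of the hub -/
lemma triple (hF : Rules s F) {X : Finset V} {M : Multiset (Sym2 V)} {h x a b : V}
    (hM : In X M) (hx : x ∉ X) (hh : x ≠ h) (ha : x ≠ a) (hb : x ≠ b) :
    F (s(h, x) ::ₘ s(x, a) ::ₘ s(x, b) ::ₘ M) =
      F (s(h, a) ::ₘ s(h, b) ::ₘ M) - F (s(a, b) ::ₘ M) := by
  rw [hF.dc h x _ hh.symm, Sym2.eq_swap (a := x) (b := a), Sym2.eq_swap (a := x) (b := b),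
    supp hF hM hx ha hb]
  simp only [ctr_cons, sbt_self, sbt_ne ha.symm, sbt_ne hb.symm, ctr_fresh hM hx]
  rw [Sym2.eq_swap (a := h) (b := a), Sym2.eq_swap (a := h) (b := b)]

end NC

namespace NC
variable {V : Type} [DecidableEq V]

/-- does the edge `ab` cross `X`? -/
def cr (X : Finset V) (a b : V) : ℕ := if (a ∈ X ↔ b ∈ X) then 0 else 1
/-- does the edge `ab` cross `X`, avoiding `h`? -/
def cr' (h : V) (X : Finset V) (a b : V) : ℕ :=
  if (a ∈ X ↔ b ∈ X) ∨ a = h ∨ b = h then 0 else 1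
/-- incidences of `ab` with `v` -/
def ic (v a b : V) : ℕ := (if a = v then 1 else 0) + (if b = v then 1 else 0)

/-- `cr` on `Sym2` -/
def crS (X : Finset V) : Sym2 V → ℕ :=
  Sym2.lift ⟨fun a b => cr X a b, by intro a b; simp only [cr, iff_comm]⟩
/-- `cr'` on `Sym2` -/
def crS' (h : V) (X : Finset V) : Sym2 V → ℕ :=
  Sym2.lift ⟨fun a b => cr' h X a b, by
    intro a b; simp only [cr', iff_comm (a := a ∈ X), or_comm (a := a = h)]⟩
/-- `ic` on `Sym2` -/
def icS (v : V) : Sym2 V → ℕ :=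
  Sym2.lift ⟨fun a b => ic v a b, by intro a b; simp only [ic, add_comm]⟩

/-- number of edges crossing `X` -/
def dl (X : Finset V) (M : Multiset (Sym2 V)) : ℕ := (M.map (crS X)).sum
/-- number of edges crossing `X` not incident with `h` -/
def dl' (h : V) (X : Finset V) (M : Multiset (Sym2 V)) : ℕ := (M.map (crS' h X)).sum
/-- degree -/
def dg (v : V) (M : Multiset (Sym2 V)) : ℕ := (M.map (icS v)).sum

@[simp] lemma dl_zero (X : Finset V) : dl X 0 = 0 := rfl
@[simp] lemma dl'_zero (h : V) (X : Finset V) : dl' h X 0 = 0 := rfl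
@[simp] lemma dg_zero (v : V) : dg v 0 = 0 := rfl
lemma dl_cons (X : Finset V) (a b : V) (M : Multiset (Sym2 V)) :
    dl X (s(a, b) ::ₘ M) = cr X a b + dl X M := by simp [dl, crS]
lemma dl'_cons (h : V) (X : Finset V) (a b : V) (M : Multiset (Sym2 V)) :
    dl' h X (s(a, b) ::ₘ M) = cr' h X a b + dl' h X M := by simp [dl', crS']
lemma dg_cons (v a b : V) (M : Multiset (Sym2 V)) :
    dg v (s(a, b) ::ₘ M) = ic v a b + dg v M := by simp [dg, icS]
lemma dl_add (X : Finset V) (M N : Multiset (Sym2 V)) : dl X (M + N) = dl X M + dl X N := by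
  simp [dl]
lemma dl'_add (h : V) (X : Finset V) (M N : Multiset (Sym2 V)) :
    dl' h X (M + N) = dl' h X M + dl' h X N := by simp [dl']
lemma dg_add (v : V) (M N : Multiset (Sym2 V)) : dg v (M + N) = dg v M + dg v N := by simp [dg]

/-- induction for multisets of edges -/
lemma edge_induct {P : Multiset (Sym2 V) → Prop} (h0 : P 0)
    (h1 : ∀ a b M, P M → P (s(a, b) ::ₘ M)) : ∀ M, P M := by
  intro M
  induction M using Multiset.induction with
  | empty => exact h0
  | cons e M ih => induction e with | _ a b => exact h1 a b M ih

lemma dl_congr {X Y Y' : Finset V} (hY : ∀ v ∈ X, v ∈ Y ↔ v ∈ Y') :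
    ∀ {M : Multiset (Sym2 V)}, In X M → dl Y M = dl Y' M := by
  intro M
  induction M using edge_induct with
  | h0 => simp
  | h1 a b M ih =>
    intro h
    obtain ⟨ha, hb, hM⟩ := In_cons.1 h
    have := hY a ha
    have := hY b hb
    rw [dl_cons, dl_cons, ih hM]
    grind [cr]

lemma dl_compl {X Y Y' : Finset V} (hY : ∀ v ∈ X, v ∈ Y ↔ v ∉ Y') :
    ∀ {M : Multiset (Sym2 V)}, In X M → dl Y M = dl Y' M := by
  intro M
  induction M using edge_induct with
  | h0 => simp
  | h1 a b M ih =>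
    intro h
    obtain ⟨ha, hb, hM⟩ := In_cons.1 h
    have := hY a ha
    have := hY b hb
    rw [dl_cons, dl_cons, ih hM]
    grind [cr]

lemma dl_none {X Y : Finset V} (hY : ∀ v ∈ X, v ∉ Y) {M : Multiset (Sym2 V)} (h : In X M) :
    dl Y M = 0 := by
  rw [dl_congr (Y' := ∅) (by simpa using hY) h]
  clear h
  induction M using edge_induct with
  | h0 => simp
  | h1 a b M ih => rw [dl_cons, ih]; simp [cr]

lemma dl_all {X Y : Finset V} (hY : ∀ v ∈ X, v ∈ Y) {M : Multiset (Sym2 V)} (h : In X M) :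
    dl Y M = 0 := by
  rw [dl_compl (Y' := ∅) (by simpa using hY) h]; exact dl_none (by simp) h

lemma dl'_congr {h : V} {X Y Y' : Finset V} (hY : ∀ v ∈ X, v ≠ h → (v ∈ Y ↔ v ∈ Y')) :
    ∀ {M : Multiset (Sym2 V)}, In X M → dl' h Y M = dl' h Y' M := by
  intro M
  induction M using edge_induct with
  | h0 => simp
  | h1 a b M ih =>
    intro h
    obtain ⟨ha, hb, hM⟩ := In_cons.1 h
    have := hY a ha
    have := hY b hb
    rw [dl'_cons, dl'_cons, ih hM, cr', cr']
    congr 1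
    grind

lemma dl'_compl {h : V} {X Y Y' : Finset V} (hY : ∀ v ∈ X, v ≠ h → (v ∈ Y ↔ v ∉ Y')) :
    ∀ {M : Multiset (Sym2 V)}, In X M → dl' h Y M = dl' h Y' M := by
  intro M
  induction M using edge_induct with
  | h0 => simp
  | h1 a b M ih =>
    intro h
    obtain ⟨ha, hb, hM⟩ := In_cons.1 h
    have := hY a ha
    have := hY b hb
    rw [dl'_cons, dl'_cons, ih hM, cr', cr']
    congr 1
    grind

lemma dl'_none {h : V} {X Y : Finset V} (hY : ∀ v ∈ X, v ≠ h → v ∉ Y) {M : Multiset (Sym2 V)}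
    (hM : In X M) : dl' h Y M = 0 := by
  rw [dl'_congr (Y' := ∅) (by simpa using hY) hM]
  clear hM
  induction M using edge_induct with
  | h0 => simp
  | h1 a b M ih => rw [dl'_cons, ih]; simp [cr']

lemma dl'_all {h : V} {X Y : Finset V} (hY : ∀ v ∈ X, v ≠ h → v ∈ Y) {M : Multiset (Sym2 V)}
    (hM : In X M) : dl' h Y M = 0 := by
  rw [dl'_compl (Y' := ∅) (by simpa using hY) hM]; exact dl'_none (by simp) hM

lemma dl'_le (h : V) (X : Finset V) (M : Multiset (Sym2 V)) : dl' h X M ≤ dl X M := by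
  induction M using edge_induct with
  | h0 => simp
  | h1 a b M ih =>
    rw [dl'_cons, dl_cons]
    have : cr' h X a b ≤ cr X a b := by grind [cr, cr']
    omega

lemma dl'_eq {h : V} {X Y : Finset V} (hX : h ∉ X) : ∀ {M : Multiset (Sym2 V)}, In X M →
    dl' h Y M = dl Y M := by
  intro M
  induction M using edge_induct with
  | h0 => simp
  | h1 a b M ih =>
    intro h'
    obtain ⟨ha, hb, hM⟩ := In_cons.1 h'
    rw [dl'_cons, dl_cons, ih hM]
    have : cr' h Y a b = cr Y a b := by grind [cr, cr']
    omega

lemma dg_none {v : V} {X : Finset V} (hv : v ∉ X) : ∀ {M : Multiset (Sym2 V)}, In X M →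
    dg v M = 0 := by
  intro M
  induction M using edge_induct with
  | h0 => simp
  | h1 a b M ih =>
    intro h'
    obtain ⟨ha, hb, hM⟩ := In_cons.1 h'
    rw [dg_cons, ih hM]
    grind [ic]

lemma dl_le_card (X : Finset V) (M : Multiset (Sym2 V)) : dl X M ≤ M.card := by
  induction M using edge_induct with
  | h0 => simp
  | h1 a b M ih =>
    rw [dl_cons, Multiset.card_cons]
    have : cr X a b ≤ 1 := by grind [cr]
    omega

/-- split the edges along a cut -/
lemma split_dl {X Y : Finset V} : ∀ {M : Multiset (Sym2 V)}, In Y M →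
    ∃ R M₁ M₂, M = R + (M₁ + M₂) ∧ In X M₁ ∧ In (Y \ X) M₂ ∧ R.card = dl X M ∧
      ∀ e ∈ R, ∃ a ∈ X, ∃ b ∈ Y \ X, e = s(a, b) := by
  intro M
  induction M using edge_induct with
  | h0 => intro _; exact ⟨0, 0, 0, by simp, In_zero _, In_zero _, by simp, by simp⟩
  | h1 a b M ih =>
    intro h'
    obtain ⟨ha, hb, hM⟩ := In_cons.1 h'
    obtain ⟨R, M₁, M₂, hE, h1, h2, hc, hR⟩ := ih hM
    rw [dl_cons]
    by_cases hac : a ∈ X <;> by_cases hbc : b ∈ X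
    · refine ⟨R, s(a, b) ::ₘ M₁, M₂, ?_, In_cons.2 ⟨hac, hbc, h1⟩, h2, ?_, hR⟩
      · rw [hE]; simp only [← Multiset.singleton_add]; abel
      · simp [cr, hac, hbc, hc]
    · refine ⟨s(a, b) ::ₘ R, M₁, M₂, ?_, h1, h2, ?_, ?_⟩
      · rw [hE]; simp only [← Multiset.singleton_add]; abel
      · simp [cr, hac, hbc, hc, add_comm]
      · intro e he
        rcases Multiset.mem_cons.1 he with rfl | he
        · exact ⟨a, hac, b, by simp [hb, hbc], rfl⟩
        · exact hR e he
    · refine ⟨s(a, b) ::ₘ R, M₁, M₂, ?_, h1, h2, ?_, ?_⟩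
      · rw [hE]; simp only [← Multiset.singleton_add]; abel
      · simp [cr, hac, hbc, hc, add_comm]
      · intro e he
        rcases Multiset.mem_cons.1 he with rfl | he
        · exact ⟨b, hbc, a, by simp [ha, hac], Sym2.eq_swap⟩
        · exact hR e he
    · refine ⟨R, M₁, s(a, b) ::ₘ M₂, ?_, h1, In_cons.2 ⟨by simp [ha, hac], by simp [hb, hbc], h2⟩,
        ?_, hR⟩
      · rw [hE]; simp only [← Multiset.singleton_add]; abel
      · simp [cr, hac, hbc, hc]

/-- split the edges along a cut through the hub -/
lemma split_dl' {h : V} {X Y : Finset V} (hX : h ∉ X) (hY : h ∉ Y) :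
    ∀ {M : Multiset (Sym2 V)}, In (insert h (X ∪ Y)) M → Disjoint X Y →
    ∃ R M₁ M₂, M = R + (M₁ + M₂) ∧ In (insert h X) M₁ ∧ In (insert h Y) M₂ ∧
      R.card = dl' h X M ∧ ∀ e ∈ R, ∃ a ∈ X, ∃ b ∈ Y, e = s(a, b) := by
  intro M
  induction M using edge_induct with
  | h0 => intro _ _; exact ⟨0, 0, 0, by simp, In_zero _, In_zero _, by simp, by simp⟩
  | h1 a b M ih =>
    intro h' hd
    obtain ⟨ha, hb, hM⟩ := In_cons.1 h'
    obtain ⟨R, M₁, M₂, hE, h1, h2, hc, hR⟩ := ih hM hd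
    rw [dl'_cons]
    have hd' := Finset.disjoint_left.1 hd
    by_cases hcr : (a ∈ X ↔ b ∈ X) ∨ a = h ∨ b = h
    · by_cases hin : a ∈ insert h X ∧ b ∈ insert h X
      · refine ⟨R, s(a, b) ::ₘ M₁, M₂, ?_, In_cons.2 ⟨hin.1, hin.2, h1⟩, h2, ?_, hR⟩
        · rw [hE]; simp only [← Multiset.singleton_add]; abel
        · simp [cr', hcr, hc]
      · refine ⟨R, M₁, s(a, b) ::ₘ M₂, ?_, h1, In_cons.2 ⟨by grind, by grind, h2⟩, ?_, hR⟩
        · rw [hE]; simp only [← Multiset.singleton_add]; abel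
        · simp [cr', hcr, hc]
    · refine ⟨s(a, b) ::ₘ R, M₁, M₂, ?_, h1, h2, ?_, ?_⟩
      · rw [hE]; simp only [← Multiset.singleton_add]; abel
      · simp [cr', hcr, hc, add_comm]
      · intro e he
        rcases Multiset.mem_cons.1 he with rfl | he
        · by_cases hac : a ∈ X
          · exact ⟨a, hac, b, by grind, rfl⟩
          · exact ⟨b, by grind, a, by grind, Sym2.eq_swap⟩
        · exact hR e he

lemma split_dl'_one {h : V} {X Y : Finset V} (hX : h ∉ X) (hY : h ∉ Y)
    {M : Multiset (Sym2 V)} (hM : In (insert h (X ∪ Y)) M) (hd : Disjoint X Y)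
    (h1 : dl' h X M = 1) : ∃ p ∈ X, ∃ r ∈ Y, ∃ M₁ M₂, M = s(p, r) ::ₘ (M₁ + M₂) ∧
      In (insert h X) M₁ ∧ In (insert h Y) M₂ := by
  obtain ⟨R, M₁, M₂, hE, h2, h3, hc, hR⟩ := split_dl' hX hY hM hd
  rw [h1, Multiset.card_eq_one] at hc
  obtain ⟨e, rfl⟩ := hc
  obtain ⟨p, hp, r, hr, rfl⟩ := hR e (by simp)
  exact ⟨p, hp, r, hr, M₁, M₂, by rw [hE, Multiset.singleton_add], h2, h3⟩

lemma split_dl'_zero {h : V} {X Y : Finset V} (hX : h ∉ X) (hY : h ∉ Y)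
    {M : Multiset (Sym2 V)} (hM : In (insert h (X ∪ Y)) M) (hd : Disjoint X Y)
    (h1 : dl' h X M = 0) : ∃ M₁ M₂, M = M₁ + M₂ ∧
      In (insert h X) M₁ ∧ In (insert h Y) M₂ := by
  obtain ⟨R, M₁, M₂, hE, h2, h3, hc, hR⟩ := split_dl' hX hY hM hd
  rw [h1, Multiset.card_eq_zero] at hc
  exact ⟨M₁, M₂, by rw [hE, hc, zero_add], h2, h3⟩

lemma split_dl_two {X Y : Finset V} {M : Multiset (Sym2 V)} (hM : In Y M)
    (h1 : dl X M = 2) : ∃ p₁ ∈ X, ∃ p₂ ∈ Y \ X, ∃ r₁ ∈ X, ∃ r₂ ∈ Y \ X, ∃ M₁ M₂,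
      M = s(p₁, p₂) ::ₘ s(r₁, r₂) ::ₘ (M₁ + M₂) ∧ In X M₁ ∧ In (Y \ X) M₂ := by
  obtain ⟨R, M₁, M₂, hE, h2, h3, hc, hR⟩ := split_dl (X := X) hM
  rw [h1, Multiset.card_eq_two] at hc
  obtain ⟨e, e', rfl⟩ := hc
  obtain ⟨p, hp, r, hr, rfl⟩ := hR e (by simp)
  obtain ⟨p', hp', r', hr', rfl⟩ := hR e' (by simp)
  exact ⟨p, hp, r, hr, p', hp', r', hr', M₁, M₂,
    by rw [hE]; simp only [Multiset.insert_eq_cons, Multiset.cons_add, Multiset.singleton_add],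
    h2, h3⟩

lemma exists_of_dl {X : Finset V} : ∀ {M : Multiset (Sym2 V)}, 0 < dl X M →
    ∃ a ∈ X, ∃ b, b ∉ X ∧ ∃ M', M = s(a, b) ::ₘ M' := by
  intro M
  induction M using edge_induct with
  | h0 => simp
  | h1 a b M ih =>
    intro h
    by_cases hcr : a ∈ X ↔ b ∈ X
    · rw [dl_cons, cr, if_pos hcr, zero_add] at h
      obtain ⟨c, hc, d, hd, M', rfl⟩ := ih h
      exact ⟨c, hc, d, hd, s(a, b) ::ₘ M', Multiset.cons_swap _ _ _⟩
    · by_cases ha : a ∈ X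
      · exact ⟨a, ha, b, by grind, M, rfl⟩
      · exact ⟨b, by grind, a, ha, M, by rw [Sym2.eq_swap]⟩

lemma exists_of_dl' {h : V} {X : Finset V} : ∀ {M : Multiset (Sym2 V)}, 0 < dl' h X M →
    ∃ a ∈ X, ∃ b, b ∉ X ∧ b ≠ h ∧ ∃ M', M = s(a, b) ::ₘ M' := by
  intro M
  induction M using edge_induct with
  | h0 => simp
  | h1 a b M ih =>
    intro h0
    by_cases hcr : (a ∈ X ↔ b ∈ X) ∨ a = h ∨ b = h
    · rw [dl'_cons, cr', if_pos hcr, zero_add] at h0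
      obtain ⟨c, hc, d, hd, hd', M', rfl⟩ := ih h0
      exact ⟨c, hc, d, hd, hd', s(a, b) ::ₘ M', Multiset.cons_swap _ _ _⟩
    · by_cases ha : a ∈ X
      · exact ⟨a, ha, b, by grind, by grind, M, rfl⟩
      · exact ⟨b, by grind, a, ha, by grind, M, by rw [Sym2.eq_swap]⟩

lemma In_of_dg {x : V} {Y : Finset V} : ∀ {M : Multiset (Sym2 V)}, In Y M → dg x M = 0 →
    In (Y.erase x) M := by
  intro M
  induction M using edge_induct with
  | h0 => intro _ _; exact In_zero _
  | h1 a b M ih =>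
    intro h h0
    obtain ⟨ha, hb, hM⟩ := In_cons.1 h
    rw [dg_cons] at h0
    have h1 : ic x a b = 0 := by omega
    have h2 : a ≠ x ∧ b ≠ x := by grind [ic]
    exact In_cons.2 ⟨by simp [ha, h2], by simp [hb, h2], ih hM (by omega)⟩

end NC

namespace NC
variable {V : Type} [DecidableEq V]

/-- the class of reduced near-cubic graphs with hub `h` -/
structure Cls (h : V) (W : Finset V) (M : Multiset (Sym2 V)) : Prop where
  hW : h ∉ W
  inn : In (insert h W) M
  nl : s(h, h) ∉ M
  ne : W.Nonempty
  deg : ∀ w ∈ W, dg w M = 3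
  c3 : ∀ X, X ⊆ W → X.Nonempty → X ≠ W → 3 ≤ dl X M
  c2 : ∀ X, X ⊆ W → X.Nonempty → X ≠ W → 2 ≤ dl' h X M
  top : 2 ≤ dl W M

/-- graphs obtained by splitting off a cubic vertex -/
structure Net (h : V) (W : Finset V) (M : Multiset (Sym2 V)) (a b : V) : Prop where
  hW : h ∉ W
  inn : In (insert h W) M
  nl : s(h, h) ∉ M
  ha : a ∈ W
  hb : b ∈ W
  deg : ∀ w ∈ W, dg w (s(h, a) ::ₘ s(h, b) ::ₘ M) = 3
  q1 : ∀ X, X ⊆ W → X.Nonempty → 3 ≤ dl X (s(h, a) ::ₘ s(h, b) ::ₘ M)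
  q2 : ∀ X, X ⊆ W → X.Nonempty → X ≠ W → 2 ≤ dl' h X (s(a, b) ::ₘ M)

lemma Net.symm {h : V} {W : Finset V} {M : Multiset (Sym2 V)} {a b : V} (hN : Net h W M a b) :
    Net h W M b a := by
  refine ⟨hN.hW, hN.inn, hN.nl, hN.hb, hN.ha, ?_, ?_, ?_⟩
  · rw [Multiset.cons_swap]; exact hN.deg
  · rw [Multiset.cons_swap]; exact hN.q1
  · rw [Sym2.eq_swap]; exact hN.q2

lemma Net.split {h : V} {W X Y : Finset V} {M M₁ M₂ : Multiset (Sym2 V)} {a b p r : V}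
    (hN : Net h W M a b) (hW : W = X ∪ Y) (hd : Disjoint X Y) (ha : a ∈ X) (hb : b ∈ Y)
    (hp : p ∈ X) (hr : r ∈ Y) (hM : M = s(p, r) ::ₘ (M₁ + M₂)) (h1 : In (insert h X) M₁)
    (h2 : In (insert h Y) M₂) : Net h X M₁ a p := by
  have hd' := Finset.disjoint_left.1 hd
  have hh := hN.hW
  have hhX : h ∉ X := by grind
  have hhY : h ∉ Y := by grind
  refine ⟨hhX, h1, ?_, ha, hp, ?_, ?_, ?_⟩
  · intro hh; apply hN.nl; rw [hM]; simp [hh]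
  · intro w hw
    have h3 := hN.deg w (by grind)
    have h4 := dg_none (v := w) (X := insert h Y) (by grind) h2
    simp only [hM, dg_cons, dg_add, h4] at h3 ⊢
    grind [ic]
  · intro Z hZ hne
    have h3 := hN.q1 Z (by grind) hne
    have h4 := dl_none (X := insert h Y) (Y := Z) (by grind) h2
    simp only [hM, dl_cons, dl_add, h4] at h3 ⊢
    grind [cr]
  · intro Z hZ hne hZX
    have h3 := hN.q2 Z (by grind) hne (by grind)
    have h3' := hN.q2 (Z ∪ Y) (by grind) (hne.mono Finset.subset_union_left) (by
      intro heq; apply hZX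
      ext v; constructor
      · intro hv; exact hZ hv
      · intro hv
        have : v ∈ Z ∪ Y := by rw [heq, hW]; simp [hv]
        grind)
    have h4 := dl'_none (h := h) (X := insert h Y) (Y := Z) (by grind) h2
    have h5 := dl'_all (h := h) (X := insert h Y) (Y := Z ∪ Y) (by grind) h2
    have h6 := dl'_congr (h := h) (X := insert h X) (Y := Z ∪ Y) (Y' := Z) (by grind) h1
    simp only [hM, dl'_cons, dl'_add, h4, h5, h6] at h3 h3' ⊢
    grind [cr']

lemma Net.cls_C {h : V} {W : Finset V} {M : Multiset (Sym2 V)} {a b : V} (hN : Net h W M a b)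
    (hs : ∀ X, X ⊆ W → X.Nonempty → X ≠ W → 2 ≤ dl' h X M) :
    Cls h W (s(h, a) ::ₘ s(h, b) ::ₘ M) := by
  have hh := hN.hW
  have ha := hN.ha
  have hb := hN.hb
  have hne : W.Nonempty := ⟨_, hN.ha⟩
  refine ⟨hN.hW, In_cons.2 ⟨by simp, by simp [hN.ha], In_cons.2 ⟨by simp, by simp [hN.hb], hN.inn⟩⟩,
    ?_, hne, hN.deg, fun X hX hn _ => hN.q1 X hX hn, ?_, ?_⟩
  · have := hN.nl
    simp only [Multiset.mem_cons, Sym2.eq_iff]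
    grind
  · intro X hX hn hX'
    have := hs X hX hn hX'
    simp only [dl'_cons]; omega
  · have := hN.q1 W subset_rfl hne; omega

lemma Net.cls_D {h : V} {W : Finset V} {M : Multiset (Sym2 V)} {a b : V} (hN : Net h W M a b)
    (hs : ∀ X, X ⊆ W → X.Nonempty → X ≠ W → 3 ≤ dl X (s(a, b) ::ₘ M)) (ht : 2 ≤ dl W M) :
    Cls h W (s(a, b) ::ₘ M) := by
  have hh := hN.hW
  have ha := hN.ha
  have hb := hN.hb
  have hne : W.Nonempty := ⟨_, hN.ha⟩
  refine ⟨hN.hW, In_cons.2 ⟨by simp [hN.ha], by simp [hN.hb], hN.inn⟩,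
    ?_, hne, ?_, hs, hN.q2, ?_⟩
  · have := hN.nl
    simp only [Multiset.mem_cons, Sym2.eq_iff]
    grind
  · intro w hw
    have := hN.deg w hw
    simp only [dg_cons] at this ⊢
    grind [ic]
  · simp only [dl_cons]; omega

lemma Cls.net {h x a b : V} {W : Finset V} {M : Multiset (Sym2 V)}
    (hC : Cls h W (s(h, x) ::ₘ s(x, a) ::ₘ s(x, b) ::ₘ M)) (hx : x ∈ W) (h2 : 2 ≤ W.card) :
    Net h (W.erase x) M a b := by
  have hh := hC.hW
  have hxh : x ≠ h := by grind
  have hx1 : ({x} : Finset V) ≠ W := by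
    intro hh; rw [← hh] at h2; simp at h2
  have hd := hC.deg x hx
  have h3 := hC.c3 {x} (by simpa using hx) (by simp) hx1
  have h4 := hC.c2 {x} (by simpa using hx) (by simp) hx1
  obtain ⟨hi1, hi2, hi3⟩ := In_cons.1 hC.inn
  obtain ⟨hi4, hi5, hi6⟩ := In_cons.1 hi3
  obtain ⟨hi7, hi8, hi9⟩ := In_cons.1 hi6
  have hdl : dl' h {x} M ≤ dg x M := by
    clear h4 h3 hd hi9 hi6 hi3 hC
    induction M using edge_induct with
    | h0 => simp
    | h1 c d M ih =>
      rw [dl'_cons, dg_cons]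
      have : cr' h {x} c d ≤ ic x c d := by
        simp only [cr', ic, Finset.mem_singleton]; grind
      omega
  simp only [dg_cons, dl'_cons, ic, cr', Finset.mem_singleton] at hd h4
  have hax : a ≠ x := by grind
  have hbx : b ≠ x := by grind
  have hah : a ≠ h := by grind
  have hbh : b ≠ h := by grind
  have hd0 : dg x M = 0 := by grind
  have haW : a ∈ W := by grind
  have hbW : b ∈ W := by grind
  refine ⟨by grind, ?_, ?_, by grind, by grind, ?_, ?_, ?_⟩
  · have := In_of_dg hi9 hd0
    rwa [Finset.erase_insert_of_ne hxh.symm] at this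
  · have := hC.nl
    grind
  · intro w hw
    have := hC.deg w (by grind)
    simp only [dg_cons] at this ⊢
    grind [ic]
  · intro Z hZ hne
    have := hC.c3 Z (by grind) hne (by grind)
    simp only [dl_cons] at this ⊢
    grind [cr]
  · intro Z hZ hne hZ'
    have h5 := hC.c2 Z (by grind) hne (by grind)
    have h6 := hC.c2 (insert x Z) (by grind) (Finset.insert_nonempty _ _) (by grind)
    have hcg := dl'_congr (h := h) (X := (insert h W).erase x) (Y := insert x Z) (Y' := Z)
      (by grind) (In_of_dg hi9 hd0)
    simp only [dl'_cons, hcg] at h5 h6 ⊢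
    grind [cr']

/-- every member of the class with at least two cubic vertices has the standard form -/
lemma Cls.form {h : V} {W : Finset V} {M : Multiset (Sym2 V)} (hC : Cls h W M)
    (h2 : 2 ≤ W.card) : ∃ x ∈ W, ∃ a b M', M = s(h, x) ::ₘ s(x, a) ::ₘ s(x, b) ::ₘ M' := by
  obtain ⟨x, hx, y, hy, M', rfl⟩ := exists_of_dl (X := W) (M := M) (by have := hC.top; omega)
  have hyh : y = h := by
    have := (In_cons.1 hC.inn).2.1
    grind
  subst hyh
  have hx1 : ({x} : Finset V) ≠ W := by
    intro hh; rw [← hh] at h2; simp at h2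
  have h4 := hC.c2 {x} (by simpa using hx) (by simp) hx1
  have h0 : cr' y {x} x y = 0 := by simp [cr']
  rw [dl'_cons, h0] at h4
  obtain ⟨x1, hx1, a, _, ha, M1, rfl⟩ := exists_of_dl' (h := y) (X := {x}) (M := M') (by omega)
  rw [Finset.mem_singleton] at hx1; subst hx1
  have h5 : cr' y {x1} x1 a ≤ 1 := by grind [cr']
  rw [dl'_cons] at h4
  obtain ⟨x2, hx2, b, _, hb, M2, rfl⟩ := exists_of_dl' (h := y) (X := {x1}) (M := M1) (by omega)
  rw [Finset.mem_singleton] at hx2; subst hx2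
  exact ⟨x2, hx, a, b, M2, by rw [Sym2.eq_swap (a := x2) (b := y)]⟩

end NC

namespace NC
variable {V : Type} [DecidableEq V]

lemma Net.K1 {h : V} {W X Y : Finset V} {M M₁ M₂ : Multiset (Sym2 V)} {a b p₁ p₂ r₁ r₂ x : V}
    (hN : Net h W M a b) (hs : ∀ X, X ⊆ W → X.Nonempty → X ≠ W → 2 ≤ dl' h X M)
    (hW : W = X ∪ Y) (hd : Disjoint X Y) (ha : a ∈ X) (hb : b ∈ X)
    (hp1 : p₁ ∈ X) (hr1 : r₁ ∈ X) (hp2 : p₂ ∈ Y) (hr2 : r₂ ∈ Y)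
    (hM : M = s(p₁, p₂) ::ₘ s(r₁, r₂) ::ₘ (M₁ + M₂)) (h1 : In X M₁)
    (h2 : In (insert h Y) M₂) (hx : x ∈ Y) :
    Cls h (insert x X) (s(h, x) ::ₘ s(x, a) ::ₘ s(x, b) ::ₘ s(h, p₁) ::ₘ s(h, r₁) ::ₘ M₁) ∧
    dl (insert x X) (s(h, x) ::ₘ s(x, a) ::ₘ s(x, b) ::ₘ s(h, p₁) ::ₘ s(h, r₁) ::ₘ M₁) = 3 := by
  have hd' := Finset.disjoint_left.1 hd
  have hh := hN.hW
  have hhX : h ∉ X := by grind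
  have hhY : h ∉ Y := by grind
  have hxX : x ∉ X := by grind
  have hxh : x ≠ h := by grind
  have hin : In (insert x X) M₁ := h1.mono (Finset.subset_insert _ _)
  have hin' : In (insert h (insert x X)) M₁ := hin.mono (Finset.subset_insert _ _)
  have htop : dl (insert x X)
      (s(h, x) ::ₘ s(x, a) ::ₘ s(x, b) ::ₘ s(h, p₁) ::ₘ s(h, r₁) ::ₘ M₁) = 3 := by
    have := dl_all (X := X) (Y := insert x X) (by grind) h1
    simp only [dl_cons, this]
    grind [cr]
  have A0 : ∀ Z ⊆ X, Z.Nonempty → 2 ≤ dl' h Z M := by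
    intro Z hZ hn
    exact hs Z (by grind) hn (by grind)
  have A1 : ∀ Z ⊆ X, Z.Nonempty → 2 ≤ cr Z p₁ p₂ + cr Z r₁ r₂ + dl Z M₁ := by
    intro Z hZ hn
    have h3 := A0 Z hZ hn
    have h4 := dl'_none (h := h) (X := insert h Y) (Y := Z) (by grind) h2
    have h5 := dl'_eq (h := h) (Y := Z) hhX h1
    simp only [hM, dl'_cons, dl'_add, h4, h5] at h3
    grind [cr, cr']
  have A2 : ∀ Z ⊆ X, Z.Nonempty →
      3 ≤ cr Z h a + cr Z h b + cr Z p₁ p₂ + cr Z r₁ r₂ + dl Z M₁ := by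
    intro Z hZ hn
    have h3 := hN.q1 Z (by grind) hn
    have h4 := dl_none (X := insert h Y) (Y := Z) (by grind) h2
    simp only [hM, dl_cons, dl_add, h4] at h3
    omega
  have A3 : ∀ Z ⊆ X, Z.Nonempty → 2 ≤ cr Z h a + cr Z h b + dl Z M₁ := by
    intro Z hZ hn
    have h3 := A2 Z hZ hn
    by_cases hpr : p₁ ∈ Z ∧ r₁ ∈ Z
    · by_cases hZX : X \ Z = ∅
      · have : Z = X := by
          apply Finset.Subset.antisymm hZ
          rwa [Finset.sdiff_eq_empty_iff_subset] at hZX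
        subst this
        grind [cr]
      · have h4 := A1 (X \ Z) (by grind) (Finset.nonempty_iff_ne_empty.2 hZX)
        have h5 := dl_compl (X := X) (Y := X \ Z) (Y' := Z) (by grind) h1
        grind [cr]
    · grind [cr]
  refine ⟨⟨by grind, ?_, ?_, by simp, ?_, ?_, ?_, by omega⟩, htop⟩
  · simp only [In_cons]
    refine ⟨by simp, by simp, by simp, by simp [ha], by simp, by simp [hb], by simp, by simp [hp1],
      by simp, by simp [hr1], hin'⟩
  · have : s(h, h) ∉ M₁ := fun hm => hhX (h1 _ hm h (by simp))
    simp only [Multiset.mem_cons, Sym2.eq_iff]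
    grind
  · intro w hw
    rcases Finset.mem_insert.1 hw with rfl | hw
    · have := dg_none hxX h1
      simp only [dg_cons, this]
      grind [ic]
    · have h3 := hN.deg w (by grind)
      have h4 := dg_none (v := w) (X := insert h Y) (by grind) h2
      simp only [hM, dg_cons, dg_add, h4] at h3 ⊢
      grind [ic]
  · intro Z hZ hn hZ'
    by_cases hxZ : x ∈ Z
    · have hc := dl_congr (X := X) (Y := Z) (Y' := Z.erase x) (by grind) h1
      by_cases h0 : Z.erase x = ∅
      · have h6 : ∀ v ∈ X, v ∉ Z := by
          intro v hv hvZ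
          have : v ∈ Z.erase x := by grind
          rw [h0] at this; simp at this
        have h5 := h6 a ha
        have h6 := h6 b hb
        simp only [dl_cons]
        grind [cr]
      · have h3 := A1 (Z.erase x) (by grind) (Finset.nonempty_iff_ne_empty.2 h0)
        simp only [dl_cons, hc]
        clear hM hs hN htop A0 A1 A2 A3 hZ' hin hin' h2 hn
        grind [cr]
    · have h3 := A2 Z (by grind) hn
      simp only [dl_cons]
      grind [cr]
  · intro Z hZ hn hZ'
    have h5 := dl'_eq (h := h) (Y := Z) hhX h1
    simp only [dl'_cons, h5]
    by_cases hxZ : x ∈ Z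
    · have h3 := A3 (X \ Z) (by grind) (by
        rw [Finset.sdiff_nonempty]; intro hXZ; apply hZ'
        grind)
      have h4 := dl_compl (X := X) (Y := X \ Z) (Y' := Z) (by grind) h1
      clear hM hs hN htop A0 A1 A2 A3 hZ' hin hin' h2 hn
      grind [cr, cr']
    · have h3 := A3 Z (by grind) hn
      clear hM hs hN htop A0 A1 A2 A3 hZ' hin hin' h2 hn
      grind [cr, cr']

lemma Net.K2 {h : V} {W X Y : Finset V} {M M₁ M₂ : Multiset (Sym2 V)} {a b p₁ p₂ r₁ r₂ w : V}
    (hN : Net h W M a b) (hs : ∀ X, X ⊆ W → X.Nonempty → X ≠ W → 2 ≤ dl' h X M)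
    (hW : W = X ∪ Y) (hd : Disjoint X Y) (ha : a ∈ X) (hb : b ∈ X)
    (hp1 : p₁ ∈ X) (hr1 : r₁ ∈ X) (hp2 : p₂ ∈ Y) (hr2 : r₂ ∈ Y)
    (hM : M = s(p₁, p₂) ::ₘ s(r₁, r₂) ::ₘ (M₁ + M₂)) (h1 : In X M₁)
    (h2 : In (insert h Y) M₂) (hw : w ∈ X) (htop : 2 ≤ dl W M) :
    Cls h (insert w Y) (s(h, w) ::ₘ s(w, p₂) ::ₘ s(w, r₂) ::ₘ M₂) ∧
    dl (insert w Y) (s(h, w) ::ₘ s(w, p₂) ::ₘ s(w, r₂) ::ₘ M₂) = dl W M + 1 ∧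
    dl W M ≤ M₂.card := by
  have hd' := Finset.disjoint_left.1 hd
  have hh := hN.hW
  have hhX : h ∉ X := by grind
  have hhY : h ∉ Y := by grind
  have hwY : w ∉ Y := by grind
  have hwh : w ≠ h := by grind
  have hin' : In (insert h (insert w Y)) M₂ := h2.mono (by grind)
  have hWM : dl W M = dl Y M₂ := by
    have h3 := dl_all (X := X) (Y := W) (by grind) h1
    have h4 := dl_congr (X := insert h Y) (Y := W) (Y' := Y) (by grind) h2
    simp only [hM, dl_cons, dl_add, h3, h4]
    grind [cr]
  have htop' : dl (insert w Y) (s(h, w) ::ₘ s(w, p₂) ::ₘ s(w, r₂) ::ₘ M₂) = dl W M + 1 := by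
    have h4 := dl_congr (X := insert h Y) (Y := insert w Y) (Y' := Y) (by grind) h2
    simp only [dl_cons, h4, hWM]
    grind [cr]
  refine ⟨⟨by grind, ?_, ?_, by simp, ?_, ?_, ?_, by omega⟩, htop', by
    rw [hWM]; exact dl_le_card _ _⟩
  · simp only [In_cons]
    refine ⟨by simp, by simp, by simp, by simp [hp2], by simp, by simp [hr2], hin'⟩
  · have : s(h, h) ∉ M₂ := fun hm => hN.nl (by rw [hM]; simp [hm])
    simp only [Multiset.mem_cons, Sym2.eq_iff]
    grind
  · intro v hv
    rcases Finset.mem_insert.1 hv with rfl | hv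
    · have := dg_none (v := v) (X := insert h Y) (by grind) h2
      simp only [dg_cons, this]
      grind [ic]
    · have h3 := hN.deg v (by grind)
      have h4 := dg_none (v := v) (X := X) (by grind) h1
      simp only [hM, dg_cons, dg_add, h4] at h3 ⊢
      grind [ic]
  · intro Z hZ hn hZ'
    by_cases hwZ : w ∈ Z
    · have h3 := hs (Z ∪ X) (by grind) (hn.mono Finset.subset_union_left) (by
        intro heq
        apply hZ'
        apply Finset.Subset.antisymm hZ
        intro v hv
        have : v ∈ W → v ∈ Z ∪ X := by rw [heq]; exact id
        clear hM hs hN htop htop' hWM hin' h2 h1 heq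
        grind)
      have h4 := dl'_congr (h := h) (X := insert h Y) (Y := Z ∪ X) (Y' := Z) (by grind) h2
      have h5 := dl'_all (h := h) (X := X) (Y := Z ∪ X) (by grind) h1
      have h6 := dl'_le h Z M₂
      simp only [hM, dl'_cons, dl'_add, h4, h5] at h3
      simp only [dl_cons]
      clear hM hs hN htop htop' hWM hZ' hin' h2 h1 hn
      grind [cr, cr']
    · have h3 := hN.q1 Z (by grind) hn
      have h4 := dl_none (X := X) (Y := Z) (by grind) h1
      simp only [hM, dl_cons, dl_add, h4] at h3 ⊢
      clear hM hs hN htop htop' hWM hZ' hin' h2 h1 hn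
      grind [cr]
  · intro Z hZ hn hZ'
    by_cases hwZ : w ∈ Z
    · have h3 := hs (Z ∪ X) (by grind) (hn.mono Finset.subset_union_left) (by
        intro heq
        apply hZ'
        apply Finset.Subset.antisymm hZ
        intro v hv
        have : v ∈ W → v ∈ Z ∪ X := by rw [heq]; exact id
        clear hM hs hN htop htop' hWM hin' h2 h1 heq
        grind)
      have h4 := dl'_congr (h := h) (X := insert h Y) (Y := Z ∪ X) (Y' := Z) (by grind) h2
      have h5 := dl'_all (h := h) (X := X) (Y := Z ∪ X) (by grind) h1
      simp only [hM, dl'_cons, dl'_add, h4, h5] at h3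
      simp only [dl'_cons]
      clear hM hs hN htop htop' hWM hZ' hin' h2 h1 hn
      grind [cr, cr']
    · have h3 := hs Z (by grind) hn (by grind)
      have h4 := dl'_none (h := h) (X := X) (Y := Z) (by grind) h1
      simp only [hM, dl'_cons, dl'_add, h4] at h3
      simp only [dl'_cons]
      clear hM hs hN htop htop' hWM hZ' hin' h2 h1 hn
      grind [cr, cr']

end NC

namespace NC

/-- the numerical parameters -/
structure Par (s t ρ : ℝ) : Prop where
  s0 : 0 < s
  t0 : 0 < t
  ht : 2 * t = 1 - s ^ 2
  hst : s ≤ t ^ 2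
  hρ : ρ * (s * (1 - t ^ 2)) = s + t ^ 2

lemma Par.t_le {s t ρ : ℝ} (P : Par s t ρ) : t ≤ 1 / 2 := by nlinarith [P.ht, sq_nonneg s]
lemma Par.s_le {s t ρ : ℝ} (P : Par s t ρ) : s ≤ 1 / 4 := by nlinarith [P.t_le, P.t0, P.hst]
lemma Par.s_le_t {s t ρ : ℝ} (P : Par s t ρ) : s ≤ t := by nlinarith [P.t_le, P.t0, P.hst]
lemma Par.one_le {s t ρ : ℝ} (P : Par s t ρ) : 1 ≤ ρ := by
  have h1 := P.t_le
  have h2 := P.s_le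
  have h3 := P.s0
  have h4 := P.t0
  have h5 := P.hρ
  have h6 : 0 < s * (1 - t ^ 2) := by apply mul_pos h3; nlinarith
  by_contra hc
  push Not at hc
  have h7 : ρ * (s * (1 - t ^ 2)) < 1 * (s * (1 - t ^ 2)) := mul_lt_mul_of_pos_right hc h6
  nlinarith [mul_pos h3 (pow_pos h4 2)]
lemma Par.key {s t ρ : ℝ} (P : Par s t ρ) : s ^ 2 * (1 + t) * ρ ≤ (t - s) * (1 - s) := by
  have h1 := P.t_le
  have h4 := P.t0
  have h5 := P.hρ
  have e : s ^ 2 * (1 + t) * ρ * (1 - t) = s * (s + t ^ 2) := by rw [← h5]; ring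
  have h6 : s * (s + t ^ 2) ≤ (t - s) * (1 - s) * (1 - t) := by
    have : (t - s) * (1 - s) * (1 - t) - s * (s + t ^ 2) = t ^ 2 - s := by
      linear_combination (-t) * P.ht
    linarith [P.hst]
  rw [← e] at h6
  exact le_of_mul_le_mul_right h6 (by linarith)

/-- numerical conclusion for nets -/
def QP (s t c d : ℝ) (k : ℕ) : Prop := ∃ f D : ℝ, c = (1 + s) * f ∧ d = f - s * D ∧
  ((0 < f ∧ f ≤ t * D) ∨ (f < 0 ∧ -f ≤ t ^ 2 * D)) ∧
  (k = 1 → 0 < f ∧ f = s * D) ∧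
  (k = 2 → (0 < f ∧ |f - s * D| * (1 - s) ≤ s * (f + D)) ∨ (f = -s ^ 2 * D ∧ 0 < D))

variable {s t ρ : ℝ}

lemma QP_split (P : Par s t ρ) {c d c₁ c₂ d₁ d₂ : ℝ} {k k₁ k₂ : ℕ} (h1 : QP s t c₁ d₁ k₁)
    (h2 : QP s t c₂ d₂ k₂) (hk : k = k₁ + k₂) (hk1 : 1 ≤ k₁) (hk2 : 1 ≤ k₂)
    (hc : (1 + s) * c = -(c₁ * c₂))
    (hd : (1 + s) * s * d = -(c₁ * c₂ + (1 + s) * (d₁ * d₂) - d₁ * c₂ - c₁ * d₂)) :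
    QP s t c d k := by
  obtain ⟨f₁, D₁, hc1, hd1, hm1, ho1, -⟩ := h1
  obtain ⟨f₂, D₂, hc2, hd2, hm2, ho2, -⟩ := h2
  have s0 := P.s0
  have t0 := P.t0
  have tl := P.t_le
  have t2 : 0 < t ^ 2 := by positivity
  have hD1 : 0 < D₁ := by
    rcases hm1 with ⟨h, h'⟩ | ⟨h, h'⟩
    · exact pos_of_mul_pos_right (lt_of_lt_of_le h h') t0.le
    · exact pos_of_mul_pos_right (lt_of_lt_of_le (neg_pos.2 h) h') t2.le
  have hD2 : 0 < D₂ := by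
    rcases hm2 with ⟨h, h'⟩ | ⟨h, h'⟩
    · exact pos_of_mul_pos_right (lt_of_lt_of_le h h') t0.le
    · exact pos_of_mul_pos_right (lt_of_lt_of_le (neg_pos.2 h) h') t2.le
  have hDD := mul_pos hD1 hD2
  refine ⟨-(f₁ * f₂), D₁ * D₂, ?_, ?_, ?_, ?_, ?_⟩
  · have : (1 + s) * c = (1 + s) * ((1 + s) * -(f₁ * f₂)) := by rw [hc, hc1, hc2]; ring
    exact mul_left_cancel₀ (by positivity) this
  · have : (1 + s) * s * d = (1 + s) * s * (-(f₁ * f₂) - s * (D₁ * D₂)) := by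
      rw [hd, hc1, hc2, hd1, hd2]; ring
    exact mul_left_cancel₀ (by positivity) this
  · rcases hm1 with ⟨h, h'⟩ | ⟨h, h'⟩ <;> rcases hm2 with ⟨g, g'⟩ | ⟨g, g'⟩
    · right
      refine ⟨neg_neg_of_pos (mul_pos h g), ?_⟩
      have := mul_le_mul h' g' g.le (by positivity)
      nlinarith
    · left
      refine ⟨by nlinarith, ?_⟩
      have h3 := mul_le_mul h' g' (by linarith) (by positivity)
      have h4 : t ^ 2 ≤ 1 := by nlinarith
      have h5 := mul_le_mul_of_nonneg_right h4 (mul_pos t0 hDD).le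
      nlinarith
    · left
      refine ⟨by nlinarith, ?_⟩
      have h3 := mul_le_mul h' g' g.le (by positivity)
      have h4 : t ^ 2 ≤ 1 := by nlinarith
      have h5 := mul_le_mul_of_nonneg_right h4 (mul_pos t0 hDD).le
      nlinarith
    · right
      refine ⟨by nlinarith, ?_⟩
      have h3 := mul_le_mul h' g' (by linarith) (by positivity)
      have h4 : t ^ 2 ≤ 1 := by nlinarith
      have h5 := mul_le_mul_of_nonneg_right h4 (mul_pos t2 hDD).le
      nlinarith
  · intro hk'; omega
  · intro hk'
    right
    have e1 := (ho1 (by omega)).2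
    have e2 := (ho2 (by omega)).2
    exact ⟨by rw [e1, e2]; ring, hDD⟩

lemma QP_one (P : Par s t ρ) {c : ℝ} (hc : 0 < c) : QP s t c 0 1 := by
  have s0 := P.s0
  refine ⟨c / (1 + s), c / (1 + s) / s, by field_simp, by field_simp; ring, Or.inl ⟨by positivity, ?_⟩,
    fun _ => ⟨by positivity, by field_simp⟩, by omega⟩
  have h1 := P.s_le_t
  have : c / (1 + s) = s * (c / (1 + s) / s) := by field_simp
  have h2 : 0 ≤ c / (1 + s) / s := by positivity
  nlinarith

lemma QP_neg (P : Par s t ρ) {c d : ℝ} {k : ℕ} (hk : k ≠ 1) (hc : 0 < c) (hd : d < 0) :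
    QP s t c d k := by
  have s0 := P.s0
  have hf : 0 < c / (1 + s) := by positivity
  set f := c / (1 + s) with hfd
  have hcf : c = (1 + s) * f := by rw [hfd]; field_simp
  obtain ⟨D, hD⟩ : ∃ D, d = f - s * D := ⟨(f - d) / s, by field_simp; ring⟩
  have h1 := P.s_le_t
  have hD0 : 0 < D := by
    by_contra hh
    push Not at hh
    nlinarith
  refine ⟨f, D, hcf, hD, Or.inl ⟨hf, by nlinarith⟩, fun h => absurd h hk, fun _ => Or.inl ⟨hf, ?_⟩⟩
  rw [← hD, abs_of_neg hd, hD]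
  have := P.s_le
  nlinarith [mul_pos s0 hD0]

lemma QP_bad (P : Par s t ρ) {c d k₁ k₂ y₁ y₂ : ℝ} {k : ℕ} (hk : k ≠ 1) (hc : 0 < c)
    (hk1 : 0 < k₁) (hk2 : 0 < k₂)
    (e1 : (1 + s) * s * c = k₁ * k₂ + s * (y₁ * y₂)) (e2 : (1 + s) * d = y₁ * y₂)
    (b1 : |y₁| * (1 - s) ≤ k₁) (b2 : |y₂| ≤ ρ * k₂) (b3 : k = 2 → |y₂| * (1 - s) ≤ k₂) :
    QP s t c d k := by
  have s0 := P.s0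
  have sl := P.s_le
  have hf : 0 < c / (1 + s) := by positivity
  set f := c / (1 + s) with hfd
  have hcf : c = (1 + s) * f := by rw [hfd]; field_simp
  obtain ⟨D, hD⟩ : ∃ D, d = f - s * D := ⟨(f - d) / s, by field_simp; ring⟩
  have h1 := P.s_le_t
  have hkk := mul_pos hk1 hk2
  refine ⟨f, D, hcf, hD, Or.inl ⟨hf, ?_⟩, fun h => absurd h hk, fun h => Or.inl ⟨hf, ?_⟩⟩
  · -- s²(1+t) y ≤ (t-s) k₁ k₂
    have h2 : |y₁| * (1 - s) * |y₂| ≤ k₁ * (ρ * k₂) :=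
      mul_le_mul b1 b2 (abs_nonneg _) hk1.le
    have h3 : y₁ * y₂ * (1 - s) ≤ ρ * (k₁ * k₂) := by
      have : y₁ * y₂ ≤ |y₁| * |y₂| := by rw [← abs_mul]; exact le_abs_self _
      nlinarith
    have h4 : s ^ 2 * (1 + t) * (y₁ * y₂) * (1 - s) ≤ (t - s) * (k₁ * k₂) * (1 - s) := by
      have h5 := P.key
      have h6 : 0 ≤ s ^ 2 * (1 + t) := by have := P.t0; positivity
      have h7 := mul_le_mul_of_nonneg_left h3 h6
      have h8 := mul_le_mul_of_nonneg_right h5 hkk.le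
      nlinarith
    have h5 : s ^ 2 * (1 + t) * (y₁ * y₂) ≤ (t - s) * (k₁ * k₂) :=
      le_of_mul_le_mul_right h4 (by linarith)
    have h6 : k₁ * k₂ = (1 + s) ^ 2 * s * f - s * ((1 + s) * d) := by
      rw [e2]; rw [hcf] at e1; linear_combination -e1
    rw [h6, ← e2] at h5
    -- t d ≤ (t - s) f
    have h7 : (s * (1 + s) ^ 2) * (t * d) ≤ (s * (1 + s) ^ 2) * ((t - s) * f) := by nlinarith
    have h8 : t * d ≤ (t - s) * f := le_of_mul_le_mul_left h7 (by positivity)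
    rw [hD] at h8
    have h9 : s * f ≤ s * (t * D) := by nlinarith
    exact le_of_mul_le_mul_left h9 s0
  · have h2 : |y₁| * (1 - s) * (|y₂| * (1 - s)) ≤ k₁ * k₂ :=
      mul_le_mul b1 (b3 h) (by have := abs_nonneg y₂; nlinarith) hk1.le
    have h6 : k₁ * k₂ = (1 + s) ^ 2 * s * f - s * ((1 + s) * d) := by
      rw [e2]; rw [hcf] at e1; linear_combination -e1
    have h3 : (1 + s) * |d| = |y₁| * |y₂| := by
      rw [← abs_mul, ← e2, abs_mul, abs_of_pos (show 0 < 1 + s by linarith)]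
    rw [← hD]
    have h4 : s * (f + D) = (1 + s) * f - d := by rw [hD]; ring
    rw [h4]
    have h5 : (1 + s) * |d| * (1 - s) ^ 2 ≤ (1 + s) * s * ((1 + s) * f - d) := by
      rw [h3]; nlinarith
    have h7 : (1 + s) * |d| * (1 - s) * s ≤ (1 + s) * |d| * (1 - s) * (1 - s) :=
      mul_le_mul_of_nonneg_left (by linarith)
        (mul_nonneg (mul_nonneg (by linarith) (abs_nonneg _)) (by linarith))
    have h8 : ((1 + s) * s) * (|d| * (1 - s)) ≤ ((1 + s) * s) * ((1 + s) * f - d) := by nlinarith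
    exact le_of_mul_le_mul_left h8 (by positivity)

lemma QP_out (P : Par s t ρ) {c d : ℝ} {k : ℕ} (h : QP s t c d k) :
    0 < c - d ∧ |d| ≤ ρ * (c - d) ∧ (k = 2 → |d| * (1 - s) ≤ c - d) := by
  obtain ⟨f, D, rfl, rfl, hm, -, h2⟩ := h
  have s0 := P.s0
  have t0 := P.t0
  have tl := P.t_le
  have sl := P.s_le
  have hρ := P.hρ
  have h1 := P.one_le
  have hst := P.s_le_t
  have e : (1 + s) * f - (f - s * D) = s * (f + D) := by ring
  rw [e]
  have h2t : 0 < 1 - t ^ 2 := by nlinarith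
  have hρ2 : ρ * s * (1 - t ^ 2) = s + t ^ 2 := by linarith
  rcases hm with ⟨hf, hfD⟩ | ⟨hf, hfD⟩
  · have hD : 0 < D := pos_of_mul_pos_right (lt_of_lt_of_le hf hfD) t0.le
    have hpos : 0 < s * (f + D) := by positivity
    refine ⟨hpos, ?_, ?_⟩
    · rw [abs_le]
      constructor
      · nlinarith
      · -- f - sD ≤ ρ s (f+D)
        have h3 : 1 ≤ ρ * s + 1 ∧ f * (1 - ρ * s) ≤ D * (s + ρ * s) := by
          refine ⟨by nlinarith, ?_⟩
          by_cases hh : 1 - ρ * s ≤ 0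
          · have : f * (1 - ρ * s) ≤ 0 := by nlinarith
            have : 0 ≤ D * (s + ρ * s) := by positivity
            linarith
          · push Not at hh
            have h4 : f * (1 - ρ * s) ≤ t * D * (1 - ρ * s) :=
              mul_le_mul_of_nonneg_right hfD hh.le
            have h5 : t * (1 - ρ * s) ≤ s + ρ * s := by
              -- t - s ≤ ρ s (1+t)
              have h6 : (t - s) * (1 - t ^ 2) ≤ ρ * s * (1 + t) * (1 - t ^ 2) := by
                have : ρ * s * (1 + t) * (1 - t ^ 2) = (s + t ^ 2) * (1 + t) := by
                  rw [← hρ2]; ring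
                rw [this]
                have := P.ht
                have := P.hst
                nlinarith [mul_pos t0 t0, mul_pos s0 t0]
              have h7 := le_of_mul_le_mul_right h6 h2t
              linarith
            have := mul_le_mul_of_nonneg_right h5 hD.le
            nlinarith
        nlinarith [h3.2]
    · intro hk
      rcases h2 hk with ⟨_, h3⟩ | ⟨h3, _⟩
      · exact h3
      · exfalso; nlinarith [pow_pos s0 2]
  · have hD : 0 < D := pos_of_mul_pos_right (lt_of_lt_of_le (neg_pos.2 hf) hfD) (by positivity)
    have hpos : 0 < s * (f + D) := by
      apply mul_pos s0; nlinarith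
    refine ⟨hpos, ?_, ?_⟩
    · have hneg : f - s * D < 0 := by nlinarith
      rw [abs_of_neg hneg]
      have h3 : -f * (1 + ρ * s) ≤ t ^ 2 * D * (1 + ρ * s) :=
        mul_le_mul_of_nonneg_right hfD (by positivity)
      have h4 : ρ * s = s + t ^ 2 + ρ * s * t ^ 2 := by linarith
      have h5 : t ^ 2 * D * (1 + ρ * s) = (ρ * s - s) * D := by linear_combination (-D) * h4
      nlinarith
    · intro hk
      rcases h2 hk with ⟨h3, _⟩ | ⟨h3, _⟩
      · exfalso; linarith
      · have : f - s * D = -(s * (1 + s) * D) := by rw [h3]; ring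
        rw [this, abs_neg, abs_of_pos (by positivity), h3]
        apply le_of_eq; ring

end NC

namespace NC
variable {V : Type} [DecidableEq V]
variable {s t ρ : ℝ} {F : Multiset (Sym2 V) → ℝ}

/-- positivity claim -/
def PA (F : Multiset (Sym2 V) → ℝ) (n : ℕ) : Prop :=
  ∀ (h : V) (W : Finset V) (M : Multiset (Sym2 V)), Cls h W M → M.card ≤ n →
    0 < (-1 : ℝ) ^ (M.card + W.card) * F M

/-- ratio claim -/
def PB (s ρ : ℝ) (F : Multiset (Sym2 V) → ℝ) (n : ℕ) : Prop :=
  ∀ (h : V) (W : Finset V) (x a b : V) (M : Multiset (Sym2 V)),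
    Cls h W (s(h, x) ::ₘ s(x, a) ::ₘ s(x, b) ::ₘ M) → x ∈ W → 2 ≤ W.card → M.card + 3 ≤ n →
    |F (s(a, b) ::ₘ M)| ≤ ρ * ((-1 : ℝ) ^ (M.card + 3 + W.card) *
      F (s(h, x) ::ₘ s(x, a) ::ₘ s(x, b) ::ₘ M)) ∧
    (dl W (s(h, x) ::ₘ s(x, a) ::ₘ s(x, b) ::ₘ M) = 3 →
      |F (s(a, b) ::ₘ M)| * (1 - s) ≤ (-1 : ℝ) ^ (M.card + 3 + W.card) *
      F (s(h, x) ::ₘ s(x, a) ::ₘ s(x, b) ::ₘ M))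

lemma abs_sg (n : ℕ) (x : ℝ) : |(-1 : ℝ) ^ n * x| = |x| := by
  rw [abs_mul, abs_pow, abs_neg, abs_one, one_pow, one_mul]

lemma Net.one_le {h : V} {W : Finset V} {M : Multiset (Sym2 V)} {a b : V} (hN : Net h W M a b) :
    1 ≤ dl W M := by
  have h1 := hN.q1 W subset_rfl ⟨a, hN.ha⟩
  simp only [dl_cons] at h1
  have h2 : cr W h a ≤ 1 := by unfold cr; split_ifs <;> omega
  have h3 : cr W h b ≤ 1 := by unfold cr; split_ifs <;> omega
  omega

lemma Net.d_zero (hF : Rules s F) {h : V} {W : Finset V} {M : Multiset (Sym2 V)} {a b : V}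
    (hN : Net h W M a b) (h1 : dl W M = 1) : F (s(a, b) ::ₘ M) = 0 := by
  obtain ⟨R, M₁, M₂, hE, h2, h3, hc, hR⟩ := split_dl (X := W) hN.inn
  rw [h1, Multiset.card_eq_one] at hc
  obtain ⟨e, rfl⟩ := hc
  obtain ⟨p, hp, r, hr, rfl⟩ := hR e (by simp)
  have hrh : r = h := by
    simp only [Finset.mem_sdiff, Finset.mem_insert] at hr
    tauto
  subst hrh
  have hM2 : M₂ = 0 := by
    rw [Multiset.eq_zero_iff_forall_notMem]
    intro e he
    induction e with | _ c d =>
    have hc := h3 _ he c (by simp)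
    have hd := h3 _ he d (by simp)
    simp only [Finset.mem_sdiff, Finset.mem_insert] at hc hd
    have hc' : c = r := by tauto
    have hd' : d = r := by tauto
    rw [hc', hd'] at he
    apply hN.nl
    rw [hE]
    simp [he]
  subst hM2
  exact pend' hF (X := W) (a := p) (b := r) (M := s(a, b) ::ₘ M₁)
    (by rintro rfl; exact hN.hW hp) (In_cons.2 ⟨hN.ha, hN.hb, h2⟩) hN.hW
    (by rw [hE]; simp only [← Multiset.singleton_add]; abel)

lemma Net.split_QP (P : Par s t ρ) (hF : Rules s F) {h : V} {W X Y : Finset V}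
    {M : Multiset (Sym2 V)} {a b : V} (hN : Net h W M a b) (hW : W = X ∪ Y) (hd : Disjoint X Y)
    (ha : a ∈ X) (hb : b ∈ Y) (h1 : dl' h X M = 1)
    (ih : ∀ W' : Finset V, W'.card < W.card → ∀ M' a' b', Net h W' M' a' b' →
      M'.card ≤ M.card →
      QP s t ((-1 : ℝ) ^ (M'.card + W'.card) * F (s(h, a') ::ₘ s(h, b') ::ₘ M'))
        ((-1 : ℝ) ^ (M'.card + W'.card) * F (s(a', b') ::ₘ M')) (dl W' M')) :
    QP s t ((-1 : ℝ) ^ (M.card + W.card) * F (s(h, a) ::ₘ s(h, b) ::ₘ M))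
        ((-1 : ℝ) ^ (M.card + W.card) * F (s(a, b) ::ₘ M)) (dl W M) := by
  have hhX : h ∉ X := by have := hN.hW; grind
  have hhY : h ∉ Y := by have := hN.hW; grind
  have hinn := hN.inn
  rw [hW] at hinn
  obtain ⟨p, hp, r, hr, M₁, M₂, hM, hi1, hi2⟩ := split_dl'_one hhX hhY hinn hd h1
  have N1 : Net h X M₁ a p := hN.split hW hd ha hb hp hr hM hi1 hi2
  have N2 : Net h Y M₂ b r := hN.symm.split (by rw [hW, Finset.union_comm]) hd.symm hb ha hr hp
    (by rw [hM, Sym2.eq_swap, add_comm]) hi2 hi1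
  have cW : W.card = X.card + Y.card := by rw [hW, Finset.card_union_of_disjoint hd]
  have cM : M.card = 1 + M₁.card + M₂.card := by rw [hM]; simp; ring
  have cX : 0 < X.card := Finset.card_pos.2 ⟨a, ha⟩
  have cY : 0 < Y.card := Finset.card_pos.2 ⟨b, hb⟩
  have Q1 := ih X (by omega) M₁ a p N1 (by omega)
  have Q2 := ih Y (by omega) M₂ b r N2 (by omega)
  have hk : dl W M = dl X M₁ + dl Y M₂ := by
    have h3 := dl_congr (X := insert h X) (Y := W) (Y' := X)
      (by have := hN.hW; have := Finset.disjoint_left.1 hd; grind) hi1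
    have h4 := dl_congr (X := insert h Y) (Y := W) (Y' := Y)
      (by have := hN.hW; have := Finset.disjoint_left.1 hd; grind) hi2
    have h5 : cr W p r = 0 := by
      have : p ∈ W := by rw [hW]; simp [hp]
      have : r ∈ W := by rw [hW]; simp [hr]
      simp [cr, *]
    rw [hM, dl_cons, dl_add, h3, h4, h5, zero_add]
  have hsg : (-1 : ℝ) ^ (M.card + W.card) =
      -((-1 : ℝ) ^ (M₁.card + X.card) * (-1 : ℝ) ^ (M₂.card + Y.card)) := by
    rw [cM, cW]; simp only [pow_add]; ring
  have e1 := D1 hF hhX hd (M₂ := s(h, b) ::ₘ M₂) (In_cons.2 ⟨by simp, by simp [hb], hi2⟩)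
    (p₂ := r) (by simp [hr]) (s(h, a) ::ₘ M₁) (In_cons.2 ⟨by simp, by simp [ha], hi1⟩) p
    (by simp [hp])
  have e2 := D4 hF hhX hd hi2 (p₂ := b) (r₂ := r) (by simp [hb]) (by simp [hr]) M₁ hi1 a
    (by simp [ha]) p (by simp [hp])
  have e3 : s(p, r) ::ₘ (s(h, a) ::ₘ M₁ + s(h, b) ::ₘ M₂) = s(h, a) ::ₘ s(h, b) ::ₘ M := by
    rw [hM]; simp only [← Multiset.singleton_add]; abel
  rw [e3, Multiset.cons_swap (s(h, p)), Multiset.cons_swap (s(h, r))] at e1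
  rw [← hM] at e2
  refine QP_split P Q1 Q2 hk N1.one_le N2.one_le ?_ ?_
  · rw [hsg]
    linear_combination (-((-1 : ℝ) ^ (M₁.card + X.card) * (-1 : ℝ) ^ (M₂.card + Y.card))) * e1
  · rw [hsg]
    linear_combination (-((-1 : ℝ) ^ (M₁.card + X.card) * (-1 : ℝ) ^ (M₂.card + Y.card))) * e2

lemma Net.bad_QP (P : Par s t ρ) (hF : Rules s F) {n : ℕ} (hA : PA F n) (hB : PB s ρ F n)
    {h : V} {W X : Finset V} {M : Multiset (Sym2 V)} {a b : V} (hN : Net h W M a b)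
    (hs : ∀ X, X ⊆ W → X.Nonempty → X ≠ W → 2 ≤ dl' h X M)
    (hX : X ⊆ W) (hXn : X.Nonempty) (hXW : X ≠ W) (hbad : dl X (s(a, b) ::ₘ M) < 3)
    (hcard : M.card + 2 ≤ n) (htop : 2 ≤ dl W M) :
    QP s t ((-1 : ℝ) ^ (M.card + W.card) * F (s(h, a) ::ₘ s(h, b) ::ₘ M))
        ((-1 : ℝ) ^ (M.card + W.card) * F (s(a, b) ::ₘ M)) (dl W M) := by
  have hc0 := hA h W _ (hN.cls_C hs) (by simp only [Multiset.card_cons]; omega)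
  have hc : 0 < (-1 : ℝ) ^ (M.card + W.card) * F (s(h, a) ::ₘ s(h, b) ::ₘ M) := by
    have e : (s(h, a) ::ₘ s(h, b) ::ₘ M).card + W.card = (M.card + W.card) + 2 := by
      simp; ring
    rw [e, pow_add] at hc0
    simpa using hc0
  have hh := hN.hW
  have g1 := hs X hX hXn hXW
  have g2 := dl'_le h X M
  have g3 := hN.q1 X hX hXn
  rw [dl_cons] at hbad
  simp only [dl_cons] at g3
  have hab : a ∈ X ∧ b ∈ X := by
    have hhX : h ∉ X := fun hx => hh (hX hx)
    clear hs hc hc0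
    unfold cr at hbad g3
    grind
  obtain ⟨ha, hb⟩ := hab
  have hhX : h ∉ X := fun hx => hh (hX hx)
  obtain ⟨p₁, hp1, p₂, hp2, r₁, hr1, r₂, hr2, M₁, M₂, hM, hi1, hi2⟩ :=
    split_dl_two (X := X) hN.inn (by omega : dl X M = 2)
  have hp2h : p₂ ≠ h ∧ r₂ ≠ h := by
    have h3 := dl'_all (h := h) (X := X) (Y := X) (by grind) hi1
    have h4 := dl'_none (h := h) (X := insert h W \ X) (Y := X) (by grind) hi2
    rw [hM] at g1
    simp only [dl'_cons, dl'_add, h3, h4] at g1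
    have h5 : cr' h X p₁ p₂ ≤ 1 := by unfold cr'; split_ifs <;> omega
    have h6 : cr' h X r₁ r₂ ≤ 1 := by unfold cr'; split_ifs <;> omega
    constructor
    · rintro rfl
      have : cr' p₂ X p₁ p₂ = 0 := by simp [cr']
      omega
    · rintro rfl
      have : cr' r₂ X r₁ r₂ = 0 := by simp [cr']
      omega
  obtain ⟨Y, hYd⟩ : ∃ Y, Y = W \ X := ⟨_, rfl⟩
  have hp2Y : p₂ ∈ Y := by grind
  have hr2Y : r₂ ∈ Y := by grind
  have hW : W = X ∪ Y := by rw [hYd, Finset.union_sdiff_of_subset hX]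
  have hd : Disjoint X Y := by rw [hYd]; exact Finset.disjoint_sdiff
  have hhY : h ∉ Y := by grind
  have hi2' : In (insert h Y) M₂ := hi2.mono (by grind)
  have hxX : p₂ ∉ X := by grind
  have hwY : p₁ ∉ Y := by grind
  obtain ⟨K1, K1t⟩ := hN.K1 hs hW hd ha hb hp1 hr1 hp2Y hr2Y hM hi1 hi2' hp2Y
  obtain ⟨K2, K2t, K2c⟩ := hN.K2 hs hW hd ha hb hp1 hr1 hp2Y hr2Y hM hi1 hi2' hp1 htop
  have cW : W.card = X.card + Y.card := by rw [hW, Finset.card_union_of_disjoint hd]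
  have cM : M.card = 2 + M₁.card + M₂.card := by rw [hM]; simp; ring
  have cX : 0 < X.card := Finset.card_pos.2 ⟨a, ha⟩
  have cY : 0 < Y.card := Finset.card_pos.2 ⟨_, hp2Y⟩
  have ciX : (insert p₂ X).card = X.card + 1 := Finset.card_insert_of_notMem hxX
  have ciY : (insert p₁ Y).card = Y.card + 1 := Finset.card_insert_of_notMem hwY
  have A1 := hA _ _ _ K1 (by simp; omega)
  have A2 := hA _ _ _ K2 (by simp; omega)
  have B1 := (hB _ _ _ _ _ _ K1 (by simp) (by omega) (by simp; omega)).2 K1t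
  have B2 := hB _ _ _ _ _ _ K2 (by simp) (by omega) (by omega)
  simp only [Multiset.card_cons] at A1 A2 B1
  rw [ciX] at A1 B1
  rw [ciY] at A2 B2
  -- the identities
  have T1 := triple hF (X := insert h X) (M := s(h, p₁) ::ₘ s(h, r₁) ::ₘ M₁) (h := h) (x := p₂)
    (a := a) (b := b)
    (In_cons.2 ⟨by simp, by simp [hp1], In_cons.2 ⟨by simp, by simp [hr1],
      hi1.mono (Finset.subset_insert _ _)⟩⟩) (by simp [hp2h.1, hxX]) hp2h.1
    (by rintro rfl; exact hxX ha) (by rintro rfl; exact hxX hb)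
  have T2 := triple hF (X := insert h Y) (M := M₂) (h := h) (x := p₁)
    (a := p₂) (b := r₂) hi2' (by rw [Finset.mem_insert, not_or]; exact ⟨by grind, hwY⟩) (by grind)
    (by grind) (by grind)
  have e4 := D4 hF hhX hd hi2' (p₂ := p₂) (r₂ := r₂) (by simp [hp2Y]) (by simp [hr2Y])
    (s(h, a) ::ₘ s(h, b) ::ₘ M₁)
    (In_cons.2 ⟨by simp, by simp [ha], In_cons.2 ⟨by simp, by simp [hb],
      hi1.mono (Finset.subset_insert _ _)⟩⟩) p₁ (by simp [hp1]) r₁ (by simp [hr1])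
  have e2 := D2 hF (X := X) (Y := insert h Y) (M₁ := s(a, b) ::ₘ M₁) (M₂ := M₂)
    (by rw [Finset.disjoint_insert_right]; exact ⟨hhX, hd⟩)
    (In_cons.2 ⟨ha, hb, hi1⟩) hi2' hp1 hr1 (Finset.mem_insert_of_mem hp2Y)
    (Finset.mem_insert_of_mem hr2Y)
  have ne : ∀ v ∈ X, h ≠ v := by rintro v hv rfl; exact hhX hv
  have s1 : F (s(p₁, r₁) ::ₘ s(h, a) ::ₘ s(h, b) ::ₘ M₁) = F (s(p₁, r₁) ::ₘ s(a, b) ::ₘ M₁) := by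
    have := supp hF (X := X) (M := s(p₁, r₁) ::ₘ M₁) (x := h) (a := a) (b := b)
      (In_cons.2 ⟨hp1, hr1, hi1⟩) hhX (ne a ha) (ne b hb)
    rw [Multiset.cons_swap (s(p₁, r₁)), Multiset.cons_swap (s(p₁, r₁)),
      Multiset.cons_swap (s(p₁, r₁)), ← this, Sym2.eq_swap (a := a), Sym2.eq_swap (a := b)]
  have s2 : F (s(a, b) ::ₘ s(h, p₁) ::ₘ s(h, r₁) ::ₘ M₁) = F (s(p₁, r₁) ::ₘ s(a, b) ::ₘ M₁) := by
    have := supp hF (X := X) (M := s(a, b) ::ₘ M₁) (x := h) (a := p₁) (b := r₁)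
      (In_cons.2 ⟨ha, hb, hi1⟩) hhX (ne _ hp1) (ne _ hr1)
    rw [Multiset.cons_swap (s(a, b)), Multiset.cons_swap (s(a, b)), ← this,
      Sym2.eq_swap (a := p₁) (b := h), Sym2.eq_swap (a := r₁) (b := h)]
  have m1 : s(p₁, p₂) ::ₘ s(r₁, r₂) ::ₘ (s(h, a) ::ₘ s(h, b) ::ₘ M₁ + M₂) =
      s(h, a) ::ₘ s(h, b) ::ₘ M := by
    rw [hM]; simp only [← Multiset.singleton_add]; abel
  have m2 : s(p₁, p₂) ::ₘ s(r₁, r₂) ::ₘ (s(a, b) ::ₘ M₁ + M₂) = s(a, b) ::ₘ M := by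
    rw [hM]; simp only [← Multiset.singleton_add]; abel
  have m3 : s(h, p₁) ::ₘ s(h, r₁) ::ₘ s(h, a) ::ₘ s(h, b) ::ₘ M₁ =
      s(h, a) ::ₘ s(h, b) ::ₘ s(h, p₁) ::ₘ s(h, r₁) ::ₘ M₁ := by
    simp only [← Multiset.singleton_add]; abel
  rw [m1, m3, s1] at e4
  rw [m2] at e2
  rw [s2] at T1 B1
  set C1 := F (s(h, a) ::ₘ s(h, b) ::ₘ s(h, p₁) ::ₘ s(h, r₁) ::ₘ M₁)
  set y1 := F (s(p₁, r₁) ::ₘ s(a, b) ::ₘ M₁)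
  set C2 := F (s(h, p₂) ::ₘ s(h, r₂) ::ₘ M₂)
  set y2 := F (s(p₂, r₂) ::ₘ M₂)
  set k1 := F (s(h, p₂) ::ₘ s(p₂, a) ::ₘ s(p₂, b) ::ₘ s(h, p₁) ::ₘ s(h, r₁) ::ₘ M₁)
  set k2 := F (s(h, p₁) ::ₘ s(p₁, p₂) ::ₘ s(p₁, r₂) ::ₘ M₂)
  have g1 : (-1 : ℝ) ^ (M₁.card + 1 + 1 + 1 + 1 + 1 + (X.card + 1)) = (-1 : ℝ) ^ (M₁.card + X.card) := by
    simp only [pow_add]; ring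
  have g1' : (-1 : ℝ) ^ (M₁.card + 1 + 1 + 3 + (X.card + 1)) = (-1 : ℝ) ^ (M₁.card + X.card) := by
    simp only [pow_add]; ring
  have g2 : (-1 : ℝ) ^ (M₂.card + 1 + 1 + 1 + (Y.card + 1)) = (-1 : ℝ) ^ (M₂.card + Y.card) := by
    simp only [pow_add]; ring
  have g2' : (-1 : ℝ) ^ (M₂.card + 3 + (Y.card + 1)) = (-1 : ℝ) ^ (M₂.card + Y.card) := by
    simp only [pow_add]; ring
  have hsg : (-1 : ℝ) ^ (M.card + W.card) =
      ((-1 : ℝ) ^ (M₁.card + X.card) * (-1 : ℝ) ^ (M₂.card + Y.card)) := by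
    rw [cM, cW]; simp only [pow_add]; ring
  rw [g1] at A1
  rw [g1'] at B1
  rw [g2] at A2
  rw [g2'] at B2
  rw [K2t] at B2
  set σ1 := (-1 : ℝ) ^ (M₁.card + X.card) with hσ1
  set σ2 := (-1 : ℝ) ^ (M₂.card + Y.card) with hσ2
  refine QP_bad (k₁ := σ1 * k1) (k₂ := σ2 * k2) (y₁ := σ1 * y1) (y₂ := σ2 * y2) P (by omega) hc
    A1 A2 ?_ ?_ ?_ ?_ ?_
  · rw [hsg, T1, T2]; linear_combination σ1 * σ2 * e4
  · rw [hsg]; linear_combination σ1 * σ2 * e2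
  · rw [hσ1, abs_sg]; exact B1
  · rw [hσ2, abs_sg]; exact B2.1
  · intro hk
    rw [hσ2, abs_sg]
    exact B2.2 (by omega)

lemma Net.QP (P : Par s t ρ) (hF : Rules s F) {n : ℕ} (hA : PA F n) (hB : PB s ρ F n) :
    ∀ m : ℕ, ∀ {h : V} {W : Finset V} {M : Multiset (Sym2 V)} {a b : V}, W.card = m →
    Net h W M a b → M.card + 2 ≤ n →
    QP s t ((-1 : ℝ) ^ (M.card + W.card) * F (s(h, a) ::ₘ s(h, b) ::ₘ M))
        ((-1 : ℝ) ^ (M.card + W.card) * F (s(a, b) ::ₘ M)) (dl W M) := by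
  intro m
  induction m using Nat.strong_induction_on with
  | _ m ih =>
  intro h W M a b hm hN hcard
  have hh := hN.hW
  have haW := hN.ha
  have hbW := hN.hb
  by_cases hsp : ∃ X, X ⊆ W ∧ X.Nonempty ∧ X ≠ W ∧ dl' h X M < 2
  · obtain ⟨X, hX, hXn, hXW, hlt⟩ := hsp
    have h2 := hN.q2 X hX hXn hXW
    rw [dl'_cons] at h2
    have h3 : cr' h X a b ≤ 1 := by unfold cr'; split_ifs <;> omega
    have h1 : dl' h X M = 1 := by omega
    have h4 : ¬ (a ∈ X ↔ b ∈ X) := by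
      intro h5
      have : cr' h X a b = 0 := by simp [cr', h5]
      omega
    have ih' : ∀ W' : Finset V, W'.card < W.card → ∀ M' a' b', Net h W' M' a' b' →
      M'.card ≤ M.card →
      NC.QP s t ((-1 : ℝ) ^ (M'.card + W'.card) * F (s(h, a') ::ₘ s(h, b') ::ₘ M'))
        ((-1 : ℝ) ^ (M'.card + W'.card) * F (s(a', b') ::ₘ M')) (dl W' M') :=
      fun W' hW' M' a' b' hN' hc => ih W'.card (by omega) rfl hN' (by omega)
    by_cases haX : a ∈ X
    · exact hN.split_QP P hF (Finset.union_sdiff_of_subset hX).symm Finset.disjoint_sdiff haX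
        (by simp [hbW]; tauto) h1 ih'
    · refine hN.split_QP P hF (X := W \ X) (Y := X) (Finset.sdiff_union_of_subset hX).symm
        Finset.sdiff_disjoint (by simp [haW, haX]) (by tauto) ?_ ih'
      rw [← h1]
      exact dl'_compl (X := insert h W) (by grind) hN.inn
  · push Not at hsp
    have hc0 := hA h W _ (hN.cls_C hsp) (by simp only [Multiset.card_cons]; omega)
    have hc : 0 < (-1 : ℝ) ^ (M.card + W.card) * F (s(h, a) ::ₘ s(h, b) ::ₘ M) := by
      have e : (s(h, a) ::ₘ s(h, b) ::ₘ M).card + W.card = (M.card + W.card) + 2 := by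
        simp; ring
      rw [e, pow_add] at hc0
      simpa using hc0
    have h1 := hN.one_le
    rcases Nat.eq_or_lt_of_le h1 with h1 | h1
    · rw [← h1, hN.d_zero hF h1.symm, mul_zero]
      exact QP_one P hc
    · by_cases hb : ∃ X, X ⊆ W ∧ X.Nonempty ∧ X ≠ W ∧ dl X (s(a, b) ::ₘ M) < 3
      · obtain ⟨X, hX, hXn, hXW, hlt⟩ := hb
        exact hN.bad_QP P hF hA hB hsp hX hXn hXW hlt hcard h1
      · push Not at hb
        have hd0 := hA h W _ (hN.cls_D hb h1) (by simp; omega)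
        refine QP_neg P (by omega) hc ?_
        have e : (s(a, b) ::ₘ M).card + W.card = (M.card + W.card) + 1 := by
          simp; ring
        rw [e, pow_succ] at hd0
        linarith

lemma main_induct (P : Par s t ρ) (hF : Rules s F) : ∀ n, PA F n ∧ PB s ρ F n := by
  intro n
  induction n with
  | zero =>
    constructor
    · intro h W M hC hc
      have := hC.top
      have := dl_le_card W M
      omega
    · intro h W x a b M _ _ _ hc
      omega
  | succ n ih =>
    obtain ⟨hA, hB⟩ := ih
    have step : ∀ (h : V) (W : Finset V) (x a b : V) (M : Multiset (Sym2 V)),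
        Cls h W (s(h, x) ::ₘ s(x, a) ::ₘ s(x, b) ::ₘ M) → x ∈ W → 2 ≤ W.card →
        M.card + 3 ≤ n + 1 →
        0 < (-1 : ℝ) ^ (M.card + 3 + W.card) * F (s(h, x) ::ₘ s(x, a) ::ₘ s(x, b) ::ₘ M) ∧
        |F (s(a, b) ::ₘ M)| ≤ ρ * ((-1 : ℝ) ^ (M.card + 3 + W.card) *
          F (s(h, x) ::ₘ s(x, a) ::ₘ s(x, b) ::ₘ M)) ∧
        (dl W (s(h, x) ::ₘ s(x, a) ::ₘ s(x, b) ::ₘ M) = 3 →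
          |F (s(a, b) ::ₘ M)| * (1 - s) ≤ (-1 : ℝ) ^ (M.card + 3 + W.card) *
          F (s(h, x) ::ₘ s(x, a) ::ₘ s(x, b) ::ₘ M)) := by
      intro h W x a b M hC hx h2 hc
      have hN := hC.net hx h2
      have hQ := hN.QP P hF hA hB _ rfl (by omega)
      have hO := QP_out P hQ
      have hh := hC.hW
      have hae := hN.ha
      have hbe := hN.hb
      have T := triple hF (h := h) (x := x) (a := a) (b := b) hN.inn
        (by simp; rintro rfl; exact hh hx) (by rintro rfl; exact hh hx)
        (by rintro rfl; simp at hae) (by rintro rfl; simp at hbe)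
      have hcW : W.card = (W.erase x).card + 1 := (Finset.card_erase_add_one hx).symm
      have hsg : (-1 : ℝ) ^ (M.card + 3 + W.card) = (-1 : ℝ) ^ (M.card + (W.erase x).card) := by
        rw [hcW]; simp only [pow_add]; ring
      have hdl : dl W (s(h, x) ::ₘ s(x, a) ::ₘ s(x, b) ::ₘ M) = 1 + dl (W.erase x) M := by
        have h3 := dl_congr (X := insert h (W.erase x)) (Y := W) (Y' := W.erase x) (by grind) hN.inn
        simp only [dl_cons, h3]
        have c1 : cr W h x = 1 := by simp [cr, hh, hx]
        have c2 : cr W x a = 0 := by simp [cr, hx, Finset.mem_of_mem_erase hae]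
        have c3 : cr W x b = 0 := by simp [cr, hx, Finset.mem_of_mem_erase hbe]
        omega
      rw [hsg, hdl, T, mul_sub]
      rw [abs_sg] at hO
      exact ⟨hO.1, hO.2.1, fun h3 => hO.2.2 (by omega)⟩
    constructor
    · intro h W M hC hc
      by_cases h2 : 2 ≤ W.card
      · obtain ⟨x, hx, a, b, M', rfl⟩ := hC.form h2
        have := (step h W x a b M' hC hx h2 (by simp only [Multiset.card_cons] at hc; omega)).1
        simpa using this
      · have hW1 : W.card = 1 := by
          have := Finset.card_pos.2 hC.ne; omega
        obtain ⟨v, rfl⟩ := Finset.card_eq_one.1 hW1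
        have hhv : h ≠ v := by have := hC.hW; simpa using this
        -- three copies of `hv`
        have hall : ∀ e ∈ M, e = s(h, v) ∨ e = s(v, v) := by
          intro e he
          induction e with | _ c d =>
          have hc := hC.inn _ he c (by simp)
          have hd := hC.inn _ he d (by simp)
          have hnl := hC.nl
          simp only [Finset.mem_insert, Finset.mem_singleton] at hc hd
          rcases hc with rfl | rfl <;> rcases hd with rfl | rfl
          · exact absurd he hnl
          · left; rfl
          · left; rw [Sym2.eq_swap]
          · right; rfl
        have hdeg := hC.deg v (by simp)
        have htop := hC.top
        have hrep : ∀ N : Multiset (Sym2 V), (∀ e ∈ N, e = s(h, v) ∨ e = s(v, v)) →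
            ∃ i j, N = Multiset.replicate i s(h, v) + Multiset.replicate j s(v, v) ∧
              dg v N = i + 2 * j ∧ dl {v} N = i := by
          intro N
          induction N using Multiset.induction with
          | empty => intro _; exact ⟨0, 0, by simp, by simp, by simp⟩
          | cons e N ihN =>
            intro hN
            obtain ⟨i, j, h3, h4, h5⟩ := ihN (fun e' he' => hN e' (Multiset.mem_cons_of_mem he'))
            rcases hN e (Multiset.mem_cons_self _ _) with rfl | rfl
            · refine ⟨i + 1, j, ?_, ?_, ?_⟩
              · rw [h3, Multiset.replicate_succ, Multiset.cons_add]
              · rw [dg_cons, h4]; simp [ic, hhv]; ring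
              · rw [dl_cons, h5]; simp [cr, hhv]; ring
            · refine ⟨i, j + 1, ?_, ?_, ?_⟩
              · rw [h3, Multiset.replicate_succ, Multiset.add_cons]
              · rw [dg_cons, h4]; simp [ic]; ring
              · rw [dl_cons, h5]; simp [cr]
        obtain ⟨i, j, h3, h4, h5⟩ := hrep M hall
        have hi : i = 3 := by omega
        have hj : j = 0 := by omega
        subst hi hj
        have h6 : M = s(h, v) ::ₘ s(h, v) ::ₘ s(h, v) ::ₘ 0 := by
          rw [h3]; simp [Multiset.replicate_succ]
        have h7 : F M = (1 + s) * s := by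
          have l1 : F (s(h, v) ::ₘ 0) = 0 := pend hF hhv.symm (In_zero ∅) (by simp)
          have l2 : F (s(h, v) ::ₘ s(h, v) ::ₘ 0) = 1 + s := by
            rw [hF.dc h v _ hhv, l1]
            simp only [ctr_cons, sbt_self, sbt_ne hhv, ctr_zero, hF.loop, hF.zero]
            ring
          rw [h6, hF.dc h v _ hhv, l2]
          simp only [ctr_cons, sbt_self, sbt_ne hhv, ctr_zero, hF.loop, hF.zero]
          ring
        have s0 := P.s0
        rw [h7, h6]
        simp only [Multiset.card_cons, Multiset.card_zero, Finset.card_singleton]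
        norm_num
        positivity
    · intro h W x a b M hC hx h2 hc
      exact (step h W x a b M hC hx h2 hc).2

lemma Cls.F_ne_zero (P : Par s t ρ) (hF : Rules s F) {h : V} {W : Finset V}
    {M : Multiset (Sym2 V)} (hC : Cls h W M) : F M ≠ 0 := by
  intro h0
  have := (main_induct P hF M.card).1 h W M hC le_rfl
  rw [h0, mul_zero] at this
  exact lt_irrefl _ this

end NC

namespace NC
variable {V : Type} [DecidableEq V]
variable {s t ρ : ℝ} {F : Multiset (Sym2 V) → ℝ}

lemma dg_pos {v : V} {e : Sym2 V} {M : Multiset (Sym2 V)} (he : e ∈ M) (hv : v ∈ e) :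
    0 < dg v M := by
  obtain ⟨M', rfl⟩ := Multiset.exists_cons_of_mem he
  induction e with | _ a b =>
  rw [dg_cons]
  rw [Sym2.mem_iff] at hv
  rcases hv with rfl | rfl <;> simp [ic]

lemma dl_single {v : V} : ∀ {M : Multiset (Sym2 V)}, (∀ a, s(a, a) ∉ M) → dl {v} M = dg v M := by
  intro M
  induction M using edge_induct with
  | h0 => simp
  | h1 a b M ih =>
    intro h
    have hab : a ≠ b := by
      rintro rfl; exact h a (Multiset.mem_cons_self _ _)
    rw [dl_cons, dg_cons, ih (fun a ha => h a (Multiset.mem_cons_of_mem ha))]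
    have : cr {v} a b = ic v a b := by
      simp only [cr, ic, Finset.mem_singleton]
      by_cases h1 : a = v <;> by_cases h2 : b = v <;> simp [h1, h2]
      exact hab (h1.trans h2.symm)
    rw [this]

/-- bridgeless, near cubic with hub `h` -/
structure Ok (h : V) (M : Multiset (Sym2 V)) : Prop where
  deg : ∀ v, v ≠ h → dg v M ≤ 3
  cut : ∀ X : Finset V, dl X M ≠ 1

lemma Ok.loop {h a : V} {M : Multiset (Sym2 V)} (hO : Ok h (s(a, a) ::ₘ M)) : Ok h M := by
  refine ⟨fun v hv => ?_, fun X => ?_⟩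
  · have := hO.deg v hv
    rw [dg_cons] at this; omega
  · have := hO.cut X
    rw [dl_cons] at this
    simpa [cr] using this

lemma Ok.zero {h : V} {X Y : Finset V} (hX : h ∉ X) (hY : h ∉ Y) (hd : Disjoint X Y)
    {M₁ M₂ : Multiset (Sym2 V)} (hO : Ok h (M₁ + M₂)) (h1 : In (insert h X) M₁)
    (h2 : In (insert h Y) M₂) : Ok h M₁ := by
  rw [Finset.disjoint_left] at hd
  refine ⟨fun v hv => ?_, fun Z => ?_⟩
  · have := hO.deg v hv
    rw [dg_add] at this; omega
  · by_cases hZ : h ∈ Z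
    · have := hO.cut (Z ∪ insert h Y)
      rw [dl_add, dl_all (Y := Z ∪ insert h Y) (by grind) h2,
        dl_congr (Y' := Z) (by grind) h1] at this
      simpa using this
    · have := hO.cut (Z ∩ X)
      rw [dl_add, dl_none (Y := Z ∩ X) (by grind) h2,
        dl_congr (Y' := Z) (by grind) h1] at this
      simpa using this

lemma Ok.one {h p r : V} {X Y : Finset V} (hX : h ∉ X) (hY : h ∉ Y) (hd : Disjoint X Y)
    {M₁ M₂ : Multiset (Sym2 V)} (hO : Ok h (s(p, r) ::ₘ (M₁ + M₂))) (h1 : In (insert h X) M₁)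
    (h2 : In (insert h Y) M₂) (hp : p ∈ X) (hr : r ∈ Y) :
    Ok h (s(h, p) ::ₘ M₁) ∧ M₂ ≠ 0 := by
  rw [Finset.disjoint_left] at hd
  refine ⟨⟨fun v hv => ?_, fun Z => ?_⟩, ?_⟩
  · have := hO.deg v hv
    rw [dg_cons, dg_add] at this
    rw [dg_cons]
    have h3 : ic v h p ≤ ic v p r := by simp [ic, hv.symm]
    omega
  · by_cases hZ : h ∈ Z
    · have := hO.cut (Z ∪ insert h Y)
      rw [dl_cons, dl_add, dl_all (Y := Z ∪ insert h Y) (by grind) h2,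
        dl_congr (Y' := Z) (by grind) h1] at this
      rw [dl_cons]
      have h3 : cr Z h p = cr (Z ∪ insert h Y) p r := by
        clear this hO h1 h2
        have := hd hp
        unfold cr; grind
      omega
    · have := hO.cut (Z ∩ X)
      rw [dl_cons, dl_add, dl_none (Y := Z ∩ X) (by grind) h2,
        dl_congr (Y' := Z) (by grind) h1] at this
      rw [dl_cons]
      have h3 : cr Z h p = cr (Z ∩ X) p r := by
        clear this hO h1 h2
        have : r ∉ X := fun h => hd h hr
        unfold cr; grind
      omega
  · rintro rfl
    have := hO.cut Y
    rw [dl_cons, add_zero, dl_none (Y := Y) (by grind) h1] at this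
    apply this
    have := hd hp
    simp [cr, hr, this]

lemma Ok.two {h p₁ p₂ r₁ r₂ : V} {X Y : Finset V} (hd : Disjoint X Y)
    {M₁ M₂ : Multiset (Sym2 V)} (hO : Ok h (s(p₁, p₂) ::ₘ s(r₁, r₂) ::ₘ (M₁ + M₂)))
    (h1 : In X M₁) (h2 : In Y M₂) (hp1 : p₁ ∈ X) (hp2 : p₂ ∈ Y) (hr1 : r₁ ∈ X) (hr2 : r₂ ∈ Y) :
    Ok h (s(p₁, r₁) ::ₘ M₁) := by
  rw [Finset.disjoint_left] at hd
  refine ⟨fun v hv => ?_, fun Z => ?_⟩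
  · have := hO.deg v hv
    rw [dg_cons, dg_cons, dg_add] at this
    rw [dg_cons]
    simp only [ic] at *
    omega
  · have e1 := hd hp1
    have e2 := hd hr1
    have e3 : p₂ ∉ X := fun h => hd h hp2
    have e4 : r₂ ∉ X := fun h => hd h hr2
    by_cases hZ : p₁ ∈ Z ∧ r₁ ∈ Z
    · have := hO.cut (Z ∪ Y)
      rw [dl_cons, dl_cons, dl_add, dl_all (Y := Z ∪ Y) (by grind) h2,
        dl_congr (Y' := Z) (by grind) h1] at this
      rw [dl_cons]
      simp [cr, hp2, hr2, hZ.1, hZ.2] at this ⊢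
      exact this
    · have := hO.cut (Z ∩ X)
      rw [dl_cons, dl_cons, dl_add, dl_none (Y := Z ∩ X) (by grind) h2,
        dl_congr (Y' := Z) (by grind) h1] at this
      rw [dl_cons]
      have h3 : cr Z p₁ r₁ = cr (Z ∩ X) p₁ p₂ + cr (Z ∩ X) r₁ r₂ := by
        by_cases z1 : p₁ ∈ Z <;> by_cases z2 : r₁ ∈ Z <;> simp [cr, z1, z2, e3, e4, hp1, hr1]
        exact hZ ⟨z1, z2⟩
      omega

lemma Ok.F_ne_zero [Fintype V] (P : Par s t ρ) (hF : Rules s F) : ∀ n h (M : Multiset (Sym2 V)),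
    M.card ≤ n → Ok h M → F M ≠ 0 := by
  have hs : (0 : ℝ) < 1 + s := by have := P.s0; linarith
  intro n
  induction n with
  | zero =>
    intro h M hc _
    rw [Multiset.card_eq_zero.1 (Nat.le_zero.1 hc), hF.zero]; exact one_ne_zero
  | succ n ih =>
    intro h M hc hO
    by_cases h0 : M = 0
    · rw [h0, hF.zero]; exact one_ne_zero
    by_cases hl : ∃ a, s(a, a) ∈ M
    · obtain ⟨a, ha⟩ := hl
      obtain ⟨M', rfl⟩ := Multiset.exists_cons_of_mem ha
      rw [hF.loop]
      simp only [Multiset.card_cons] at hc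
      exact mul_ne_zero hs.ne' (ih h M' (by omega) hO.loop)
    push Not at hl
    -- choose a non-isolated hub
    obtain ⟨h, hO, hh⟩ : ∃ h, Ok h M ∧ 0 < dg h M := by
      by_cases hh : 0 < dg h M
      · exact ⟨h, hO, hh⟩
      · obtain ⟨e, he⟩ := Multiset.exists_mem_of_ne_zero h0
        induction e with | _ a b =>
        refine ⟨a, ⟨fun v hv => ?_, hO.cut⟩, dg_pos he (by simp)⟩
        by_cases hvh : v = h
        · subst hvh; omega
        · exact hO.deg v hvh
    obtain ⟨W, hWdef⟩ : ∃ W : Finset V, ∀ v, v ∈ W ↔ v ≠ h ∧ 0 < dg v M :=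
      ⟨Finset.univ.filter (fun v => v ≠ h ∧ 0 < dg v M), by simp⟩
    have hW : h ∉ W := by simp [hWdef]
    have hin : In (insert h W) M := by
      intro e he v hv
      rw [Finset.mem_insert, hWdef]
      by_cases hvh : v = h
      · exact Or.inl hvh
      · exact Or.inr ⟨hvh, dg_pos he hv⟩
    have hne : W.Nonempty := by
      obtain ⟨e, he⟩ := Multiset.exists_mem_of_ne_zero h0
      induction e with | _ a b =>
      have hab : a ≠ b := by rintro rfl; exact hl a he
      by_cases hah : a = h
      · exact ⟨b, (hWdef b).2 ⟨by rintro rfl; exact hab hah, dg_pos he (by simp)⟩⟩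
      · exact ⟨a, (hWdef a).2 ⟨hah, dg_pos he (by simp)⟩⟩
    have htop : 0 < dl W M := by
      rw [dl_compl (Y' := {h}) (by intro v hv; grind) hin, dl_single hl]; exact hh
    by_cases c0 : ∃ X, X ⊆ W ∧ X.Nonempty ∧ X ≠ W ∧ dl' h X M = 0
    · obtain ⟨X, hX, ⟨x, hx⟩, hXW, hz⟩ := c0
      obtain ⟨y, hy⟩ : (W \ X).Nonempty := by
        rw [Finset.sdiff_nonempty]; exact fun h' => hXW (hX.antisymm h')
      have hhX : h ∉ X := fun h' => hW (hX h')
      have hhY : h ∉ W \ X := fun h' => hW (Finset.mem_sdiff.1 h').1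
      have hd : Disjoint X (W \ X) := Finset.disjoint_sdiff
      obtain ⟨M₁, M₂, rfl, h1, h2⟩ := split_dl'_zero hhX hhY
        (by rwa [Finset.union_sdiff_of_subset hX]) hd hz
      have n1 : M₁ ≠ 0 := by
        rintro rfl
        have := ((hWdef x).1 (hX hx)).2
        rw [zero_add, dg_none (by grind) h2] at this
        omega
      have n2 : M₂ ≠ 0 := by
        rintro rfl
        have := ((hWdef y).1 (by grind)).2
        rw [add_zero, dg_none (by grind) h1] at this
        omega
      rw [D0 hF hhX hd h2 M₁ h1]
      rw [← Multiset.card_pos] at n1 n2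
      rw [Multiset.card_add] at hc
      refine mul_ne_zero (ih h M₁ (by omega) (hO.zero hhX hhY hd h1 h2)) (ih h M₂ (by omega) ?_)
      rw [add_comm] at hO
      exact hO.zero hhY hhX hd.symm h2 h1
    by_cases c1 : ∃ X, X ⊆ W ∧ X.Nonempty ∧ X ≠ W ∧ dl' h X M = 1
    · obtain ⟨X, hX, -, -, hz⟩ := c1
      have hhX : h ∉ X := fun h' => hW (hX h')
      have hhY : h ∉ W \ X := fun h' => hW (Finset.mem_sdiff.1 h').1
      have hd : Disjoint X (W \ X) := Finset.disjoint_sdiff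
      obtain ⟨p, hp, r, hr, M₁, M₂, rfl, h1, h2⟩ := split_dl'_one hhX hhY
        (by rwa [Finset.union_sdiff_of_subset hX]) hd hz
      have O1 := hO.one hhX hhY hd h1 h2 hp hr
      have hO' := hO
      rw [add_comm, Sym2.eq_swap] at hO'
      have O2 := hO'.one hhY hhX hd.symm h2 h1 hr hp
      have n2 := O1.2
      have n1 := O2.2
      rw [← Multiset.card_pos] at n1 n2
      rw [Multiset.card_cons, Multiset.card_add] at hc
      have := D1 hF hhX hd h2 (Finset.mem_insert_of_mem hr) M₁ h1 p (Finset.mem_insert_of_mem hp)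
      intro hz
      rw [hz, mul_zero] at this
      exact mul_ne_zero (ih h _ (by simp only [Multiset.card_cons]; omega) O1.1)
        (ih h _ (by simp only [Multiset.card_cons]; omega) O2.1) this.symm
    by_cases c2 : ∃ X, X ⊆ W ∧ X.Nonempty ∧ dl X M = 2
    · obtain ⟨X, hX, -, hz⟩ := c2
      obtain ⟨p₁, hp1, p₂, hp2, r₁, hr1, r₂, hr2, M₁, M₂, rfl, h1, h2⟩ := split_dl_two hin hz
      have hd : Disjoint X (insert h W \ X) := Finset.disjoint_sdiff
      have O1 := hO.two hd h1 h2 hp1 hp2 hr1 hr2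
      have hO' := hO
      rw [add_comm, Sym2.eq_swap, Sym2.eq_swap (a := r₁)] at hO'
      have O2 := hO'.two hd.symm h2 h1 hp2 hp1 hr2 hr1
      simp only [Multiset.card_cons, Multiset.card_add] at hc
      have := D2 hF hd h1 h2 hp1 hr1 hp2 hr2
      intro hz
      rw [hz, mul_zero] at this
      exact mul_ne_zero (ih h _ (by simp only [Multiset.card_cons]; omega) O1)
        (ih h _ (by simp only [Multiset.card_cons]; omega) O2) this.symm
    push Not at c0 c1 c2
    have k2 : ∀ X, X ⊆ W → X.Nonempty → X ≠ W → 2 ≤ dl' h X M := by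
      intro X a b c
      have := c0 X a b c
      have := c1 X a b c
      omega
    have k3 : ∀ X, X ⊆ W → X.Nonempty → 3 ≤ dl X M := by
      intro X a b
      have e1 := c2 X a b
      have e2 := hO.cut X
      by_cases c : X = W
      · subst c; omega
      · have := k2 X a b c
        have := dl'_le h X M
        omega
    refine Cls.F_ne_zero P hF (h := h) (W := W) ⟨hW, hin, hl h, hne, ?_, fun X a b _ => k3 X a b, k2, ?_⟩
    · intro w hw
      have e1 := k3 {w} (by simpa using hw) (by simp)
      rw [dl_single hl] at e1
      have e2 := hO.deg w ((hWdef w).1 hw).1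
      omega
    · have := k3 W subset_rfl hne; omega

end NC

namespace NC
variable {V : Type} [DecidableEq V]

lemma eqv_lift {α β : Type} {R : α → α → Prop} {f : α → β} (hf : ∀ x y, R x y → f x = f y)
    {x y : α} (h : Relation.EqvGen R x y) : f x = f y := by
  induction h with
  | rel x y h => exact hf x y h
  | refl x => rfl
  | symm x y _ ih => exact ih.symm
  | trans x y z _ _ h1 h2 => exact h1.trans h2

/-- adjacency -/
def adj (S : Multiset (Sym2 V)) (a b : V) : Prop := s(a, b) ∈ S

/-- component setoid -/
def cst (S : Multiset (Sym2 V)) : Setoid V := Relation.EqvGen.setoid (adj S)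

/-- number of components -/
noncomputable def cc (S : Multiset (Sym2 V)) : ℕ := Nat.card (Quotient (cst S))

lemma mk_eq {S : Multiset (Sym2 V)} {a b : V} (h : s(a, b) ∈ S) :
    (Quotient.mk (cst S) a) = Quotient.mk (cst S) b :=
  Quotient.sound (Relation.EqvGen.rel a b h)

/-- lifting to components -/
def clift {β : Type} (S : Multiset (Sym2 V)) (f : V → β) (hf : ∀ x y, s(x, y) ∈ S → f x = f y) :
    Quotient (cst S) → β :=
  Quotient.lift f (fun _ _ h => eqv_lift (R := adj S) hf h)

lemma cc_zero : cc (0 : Multiset (Sym2 V)) = Nat.card V := by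
  refine Nat.card_congr ⟨clift 0 id (by simp), fun v => Quotient.mk _ v, ?_, ?_⟩
  · intro x
    induction x using Quotient.inductionOn with | _ v => rfl
  · intro v; rfl

lemma cc_loop (a : V) (S : Multiset (Sym2 V)) : cc (s(a, a) ::ₘ S) = cc S := by
  refine Nat.card_congr ⟨clift _ (fun v => Quotient.mk (cst S) v) ?_,
    clift _ (fun v => Quotient.mk _ v) ?_, ?_, ?_⟩
  · intro x y h
    rcases Multiset.mem_cons.1 h with h | h
    · have : x = y := by
        rw [Sym2.eq_iff] at h; rcases h with ⟨rfl, rfl⟩ | ⟨rfl, rfl⟩ <;> rfl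
      rw [this]
    · exact mk_eq h
  · intro x y h
    exact mk_eq (Multiset.mem_cons_of_mem h)
  · intro x
    induction x using Quotient.inductionOn with | _ v => rfl
  · intro x
    induction x using Quotient.inductionOn with | _ v => rfl

lemma cc_ctr [Finite V] {a b : V} (hab : a ≠ b) (S : Multiset (Sym2 V)) :
    cc (ctr b a S) = cc (s(a, b) ::ₘ S) + 1 := by
  have key : Quotient (cst (ctr b a S)) ≃ Option (Quotient (cst (s(a, b) ::ₘ S))) := by
    have hs : ∀ x, (Quotient.mk (cst (s(a, b) ::ₘ S)) (sbt b a x)) = Quotient.mk _ x := by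
      intro x
      by_cases hx : x = b
      · subst hx; rw [sbt_self]; exact mk_eq (Multiset.mem_cons_self _ _)
      · rw [sbt_ne hx]
    have hb : ∀ x, sbt b a x ≠ b := by
      intro x
      by_cases hx : x = b
      · subst hx; rw [sbt_self]; exact hab
      · rw [sbt_ne hx]; exact hx
    refine ⟨clift _ (fun v => if v = b then none else some (Quotient.mk _ v)) ?_,
      fun o => o.elim (Quotient.mk _ b)
        (clift _ (fun v => Quotient.mk (cst (ctr b a S)) (sbt b a v)) ?_), ?_, ?_⟩
    · intro x y h
      simp only [ctr, Multiset.mem_map] at h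
      obtain ⟨e, he, h⟩ := h
      induction e with | _ x' y' =>
      rw [Sym2.map_mk, Sym2.eq_iff] at h
      have := mk_eq (Multiset.mem_cons_of_mem he : s(x', y') ∈ s(a, b) ::ₘ S)
      rcases h with ⟨rfl, rfl⟩ | ⟨rfl, rfl⟩
      · simp only [hb, if_false, hs, this]
      · simp only [hb, if_false, hs, this]
    · intro x y h
      rcases Multiset.mem_cons.1 h with h | h
      · rw [Sym2.eq_iff] at h
        rcases h with ⟨rfl, rfl⟩ | ⟨rfl, rfl⟩ <;> simp [sbt_self, sbt_ne hab]
      · apply mk_eq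
        exact Multiset.mem_map.2 ⟨s(x, y), h, by simp⟩
    · intro x
      induction x using Quotient.inductionOn with | _ v =>
      by_cases hv : v = b
      · simp [clift, hv]
      · simp [clift, hv, sbt_ne hv]
    · intro o
      rcases o with _ | x
      · simp [clift]
      · induction x using Quotient.inductionOn with | _ v =>
        simp [clift, hb, hs]
  unfold cc
  rw [Nat.card_congr key, Finite.card_option]

lemma cc_ge [Finite V] : ∀ n (S : Multiset (Sym2 V)), S.card = n → Nat.card V ≤ n + cc S := by
  intro n
  induction n with
  | zero => intro S h; rw [Multiset.card_eq_zero.1 h, cc_zero]; omega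
  | succ n ih =>
    intro S h
    have h0 : S ≠ 0 := by rintro rfl; simp at h
    obtain ⟨e, he⟩ := Multiset.exists_mem_of_ne_zero h0
    obtain ⟨S, rfl⟩ := Multiset.exists_cons_of_mem he
    rw [Multiset.card_cons] at h
    induction e with | _ a b =>
    by_cases hab : a = b
    · subst hab
      have := ih S (by omega)
      rw [cc_loop]; omega
    · have := ih (ctr b a S) (by rw [card_ctr]; omega)
      rw [cc_ctr hab] at this; omega

/-- summand -/
noncomputable def tm (q : ℝ) (n : ℕ) (S : Multiset (Sym2 V)) : ℝ :=
  (-1 : ℝ) ^ (n - S.card) * q ^ (S.card + cc S - Nat.card V)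

/-- the flow polynomial of an edge multiset -/
noncomputable def fl (q : ℝ) (M : Multiset (Sym2 V)) : ℝ := (M.powerset.map (tm q M.card)).sum

lemma powerset_mapc {α β : Type} (f : α → β) (M : Multiset α) :
    (M.map f).powerset = M.powerset.map (Multiset.map f) := by
  induction M using Multiset.induction with
  | empty => simp
  | cons a M ih => simp [Multiset.powerset_cons, ih, Multiset.map_map, Function.comp_def]

lemma fl_cons (q : ℝ) (e : Sym2 V) (M : Multiset (Sym2 V)) :
    fl q (e ::ₘ M) = (M.powerset.map fun S => tm q (M.card + 1) (e ::ₘ S)).sum - fl q M := by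
  unfold fl
  rw [Multiset.powerset_cons, Multiset.map_add, Multiset.sum_add, Multiset.map_map,
    Multiset.card_cons]
  have : (M.powerset.map (tm q (M.card + 1))).sum = - (M.powerset.map (tm q M.card)).sum := by
    rw [← Multiset.sum_map_neg', Multiset.map_map]
    congr 1
    apply Multiset.map_congr rfl
    intro S hS
    have := Multiset.card_le_card (Multiset.mem_powerset.1 hS)
    simp only [tm, Function.comp]
    rw [Nat.sub_add_comm this, pow_succ]; ring
  rw [this]
  simp only [Function.comp_def]
  ring

lemma fl_rules [Finite V] (q : ℝ) : Rules (V := V) (q - 2) (fl q) := by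
  refine ⟨?_, ?_, ?_⟩
  · simp [fl, tm, cc_zero]
  · intro a M
    rw [fl_cons]
    have : (M.powerset.map fun S => tm q (M.card + 1) (s(a, a) ::ₘ S)).sum = q * fl q M := by
      unfold fl
      rw [← Multiset.sum_map_mul_left]
      congr 1
      apply Multiset.map_congr rfl
      intro S hS
      have := cc_ge _ S rfl
      unfold tm
      rw [cc_loop, Multiset.card_cons, show S.card + 1 + cc S - Nat.card V =
        (S.card + cc S - Nat.card V) + 1 by omega, Nat.add_sub_add_right]
      ring
    rw [this]; ring
  · intro a b M hab
    rw [fl_cons]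
    congr 1
    unfold fl
    conv_rhs => unfold ctr
    rw [powerset_mapc, Multiset.map_map]
    congr 1
    apply Multiset.map_congr rfl
    intro S hS
    have h1 := cc_ctr hab S
    have h2 := card_ctr b a S
    unfold ctr at h1 h2
    simp only [tm, Function.comp, h1, h2, Multiset.card_cons, Multiset.card_map]
    rw [Nat.add_sub_add_right, show S.card + 1 + cc (s(a, b) ::ₘ S) =
      S.card + (cc (s(a, b) ::ₘ S) + 1) by omega]

end NC

namespace NC
variable {V : Type} [DecidableEq V]

lemma sum_pow {E : Type} [DecidableEq E] (φ : E → Sym2 V) (s : Finset E) :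
    ∀ T : Multiset (Sym2 V) → ℝ, ∑ E' ∈ s.powerset, T (E'.val.map φ) =
      ((s.val.map φ).powerset.map T).sum := by
  induction s using Finset.induction_on with
  | empty => intro T; simp
  | insert e s he ih =>
    intro T
    rw [Finset.sum_powerset_insert he, ih, Finset.insert_val_of_notMem he, Multiset.map_cons,
      Multiset.powerset_cons, Multiset.map_add, Multiset.sum_add, Multiset.map_map]
    congr 1
    have := ih (fun S => T (φ e ::ₘ S))
    simp only [Function.comp_def]
    rw [← this]
    apply Finset.sum_congr rfl
    intro E' hE'
    have : e ∉ E' := fun h => he (Finset.mem_powerset.1 hE' h)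
    rw [Finset.insert_val_of_notMem this, Multiset.map_cons]

/-- the edge multiset -/
def em {E : Type} [Fintype E] (G : Multigraph V E) : Multiset (Sym2 V) :=
  (Finset.univ : Finset E).val.map fun e => s(G.fst e, G.snd e)

lemma ncomp_eq {E : Type} (G : Multigraph V E) (E' : Finset E) :
    G.ncomp ↑E' = cc (E'.val.map fun e => s(G.fst e, G.snd e)) := by
  have : G.reachSetoid ↑E' = cst (E'.val.map fun e => s(G.fst e, G.snd e)) := by
    unfold Multigraph.reachSetoid cst
    congr 1
    funext a b
    simp only [Multigraph.edgeRelOn, adj, Multiset.mem_map, Sym2.eq_iff, Finset.mem_coe,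
      Finset.mem_val]
  unfold Multigraph.ncomp cc
  rw [this]

lemma eval_eq {E : Type} [Fintype V] [Fintype E] [DecidableEq E] (G : Multigraph V E) (q : ℝ) :
    G.flowPoly.eval q = fl q (em G) := by
  have hi : Fintype.ofFinite E = (inferInstance : Fintype E) := Subsingleton.elim _ _
  unfold Multigraph.flowPoly fl em
  rw [← sum_pow, Polynomial.eval_finsetSum, hi, Finset.powerset_univ]
  apply Finset.sum_congr rfl
  intro E' _
  simp only [tm, ncomp_eq, Multiset.card_map]
  simp

lemma dg_em {E : Type} [Fintype E] (G : Multigraph V E) (v : V) : dg v (em G) = G.degree v := by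
  classical
  unfold dg em Multigraph.degree
  rw [Multiset.map_map]
  have : ∀ f : E → V, Nat.card {e | f e = v} = ∑ e, if f e = v then 1 else 0 := by
    intro f
    rw [Finset.sum_boole, Nat.card_eq_fintype_card, Fintype.card_subtype]
    simp
  rw [this, this, ← Finset.sum_add_distrib]
  rfl

lemma dl_em {E : Type} [Fintype E] (G : Multigraph V E) (X : Finset V) :
    dl X (em G) = ∑ e, cr X (G.fst e) (G.snd e) := by
  unfold dl em
  rw [Multiset.map_map]
  rfl

lemma em_cut {E : Type} [Fintype V] [Fintype E] (G : Multigraph V E) (hG : G.Bridgeless)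
    (X : Finset V) : dl X (em G) ≠ 1 := by
  classical
  intro h1
  rw [dl_em] at h1
  obtain ⟨e, -, he⟩ : ∃ e ∈ Finset.univ, cr X (G.fst e) (G.snd e) ≠ 0 := by
    apply Finset.exists_ne_zero_of_sum_ne_zero; omega
  rw [← Finset.add_sum_erase _ _ (Finset.mem_univ e)] at h1
  have h2 : ∑ e' ∈ Finset.univ.erase e, cr X (G.fst e') (G.snd e') = 0 := by omega
  rw [Finset.sum_eq_zero_iff] at h2
  have h3 : ∀ e', e' ≠ e → (G.fst e' ∈ X ↔ G.snd e' ∈ X) := by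
    intro e' he'
    have := h2 e' (by simp [he'])
    unfold cr at this
    by_contra hc
    simp [hc] at this
  have h4 : ¬ (G.fst e ∈ X ↔ G.snd e ∈ X) := by
    intro hc; apply he; simp [cr, hc]
  apply hG e
  unfold Multigraph.IsBridge Multigraph.numComponents Multigraph.ncomp
  by_contra hlt
  push Not at hlt
  let f : Quotient (G.reachSetoid {e' | e' ≠ e}) → Quotient (G.reachSetoid Set.univ) :=
    Quotient.lift (fun v => Quotient.mk _ v) (fun x y h =>
      eqv_lift (R := G.edgeRelOn {e' | e' ≠ e})
        (f := fun v => Quotient.mk (G.reachSetoid Set.univ) v)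
        (fun x y hxy => Quotient.sound (Relation.EqvGen.rel x y (by
          obtain ⟨e', -, h⟩ := hxy
          exact ⟨e', trivial, h⟩))) h)
  have hf : Function.Surjective f := by
    intro x
    induction x using Quotient.inductionOn with | _ v => exact ⟨Quotient.mk _ v, rfl⟩
  have hb := (hf.bijective_of_nat_card_le hlt).1
  have h5 : f (Quotient.mk _ (G.fst e)) = f (Quotient.mk _ (G.snd e)) :=
    Quotient.sound (Relation.EqvGen.rel _ _ ⟨e, trivial, Or.inl ⟨rfl, rfl⟩⟩)
  have h6 := Quotient.exact (hb h5)
  have h7 : (G.fst e ∈ X) = (G.snd e ∈ X) :=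
    eqv_lift (R := G.edgeRelOn {e' | e' ≠ e}) (f := fun v => v ∈ X) (by
      rintro x y ⟨e', he', ⟨rfl, rfl⟩ | ⟨rfl, rfl⟩⟩
      · exact propext (h3 e' he')
      · exact propext (h3 e' he').symm) h6
  exact h4 (iff_of_eq h7)

lemma par_of {α q : ℝ} (hα : α ^ 4 - 8 * α ^ 3 + 22 * α ^ 2 - 28 * α + 17 = 0)
    (hα2 : 2 < α) (hα3 : α < 3) (hq : 2 < q) (hqα : q ≤ α) :
    ∃ t ρ, Par (q - 2) t ρ := by
  obtain ⟨s, rfl⟩ : ∃ s, q = s + 2 := ⟨q - 2, by ring⟩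
  obtain ⟨a, rfl⟩ : ∃ a, α = a + 2 := ⟨α - 2, by ring⟩
  have e : s + 2 - 2 = s := by ring
  rw [e]
  have hs : 0 < s := by linarith
  have hsa : s ≤ a := by linarith
  have ha : a < 1 := by linarith
  have h1 : (1 - a ^ 2) ^ 2 = 4 * a := by linear_combination hα
  have h2 : 0 < 1 - a ^ 2 := by nlinarith
  have h3 : 1 - a ^ 2 ≤ 1 - s ^ 2 := by nlinarith
  have h4 : (1 - a ^ 2) ^ 2 ≤ (1 - s ^ 2) ^ 2 := by gcongr
  have h5 : ((1 - s ^ 2) / 2) ^ 2 < 1 := by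
    have : 0 < s ^ 2 := by positivity
    nlinarith
  refine ⟨(1 - s ^ 2) / 2, (s + ((1 - s ^ 2) / 2) ^ 2) / (s * (1 - ((1 - s ^ 2) / 2) ^ 2)),
    hs, by linarith, by ring, by nlinarith, ?_⟩
  have : s * (1 - ((1 - s ^ 2) / 2) ^ 2) ≠ 0 := mul_ne_zero hs.ne' (by linarith)
  exact div_mul_cancel₀ _ this

end NC

open Multigraph in
/-- Jackson. Let `α₂ ≈ 2.225` be the unique real root in `(2,3)` of
`q⁴ − 8q³ + 22q² − 28q + 17`. Then every bridgeless near-cubic finite multigraph `G`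
(at most one vertex of degree larger than `3`) has no flow root in `(2, α₂]`. -/
theorem flowPoly_ne_zero_near_cubic {V E : Type} [Fintype V] [Fintype E]
    (G : Multigraph V E) (hbl : G.Bridgeless)
    (hnc : {v | 3 < G.degree v}.ncard ≤ 1)
    (α : ℝ) (hα : α ^ 4 - 8 * α ^ 3 + 22 * α ^ 2 - 28 * α + 17 = 0)
    (hα2 : 2 < α) (hα3 : α < 3) :
    ∀ q : ℝ, 2 < q → q ≤ α → G.flowPoly.eval q ≠ 0 := by
  classical
  intro q hq hqα
  obtain ⟨t, ρ, P⟩ := NC.par_of hα hα2 hα3 hq hqα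
  rw [NC.eval_eq]
  have hR := NC.fl_rules (V := V) q
  have hz := hR.zero
  rcases isEmpty_or_nonempty V with hV | ⟨⟨v₀⟩⟩
  · have hE : IsEmpty E := ⟨fun e => hV.elim (G.fst e)⟩
    have : NC.em G = 0 := by simp [NC.em, Finset.univ_eq_empty]
    rw [this]
    intro h0
    exact one_ne_zero (hz.symm.trans h0)
  · have hh : ∃ h, ∀ v, v ≠ h → G.degree v ≤ 3 := by
      rw [Set.ncard_le_one_iff] at hnc
      by_cases hx : ∃ x, 3 < G.degree x
      · obtain ⟨x, hx⟩ := hx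
        refine ⟨x, fun v hv => ?_⟩
        by_contra hc
        exact hv (hnc (a := v) (b := x) (not_le.1 hc) hx)
      · push Not at hx
        exact ⟨v₀, fun v _ => hx v⟩
    obtain ⟨h, hh⟩ := hh
    exact NC.Ok.F_ne_zero P hR _ h (NC.em G) le_rfl
      ⟨fun v hv => by rw [NC.dg_em]; exact hh v hv, NC.em_cut G hbl⟩
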